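/- arXiv:1705.05781 — 12 statements merged into one kernel-verified Lean document; each statement's English description precedes it below -/
import Mathlib

section
/- Let L be a finite modular semilattice. Then P(L), i.e., the poset L^ir of ∨-irreducible elements equipped with the induced inconsistency relation ⌣ and induced collinearity relation C, is a PPIP: the relations satisfy (IC1), (IC2), (CT1), (CT2), Regularity, weak Triangle, (CC1) and (CC2). -/
/-- The join of `a` and `b` exists (there is a least upper bound of the pair). -/
def JoinExists {α : Type*} [Preorder α] (a b : α) : Prop :=
  ∃ j, IsLUB ({a, b} : Set α) j

/-- `a` and `b` are incomparable. -/
def Incomp {α : Type*} [Preorder α] (a b : α) : Prop :=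
  ¬ a ≤ b ∧ ¬ b ≤ a

/-- A collinear triple: pairwise incomparable elements whose pairwise joins all exist
and coincide. -/
def Collinear3 {α : Type*} [Preorder α] (x y z : α) : Prop :=
  Incomp x y ∧ Incomp y z ∧ Incomp z x ∧
  ∃ j, IsLUB ({x, y} : Set α) j ∧ IsLUB ({y, z} : Set α) j ∧ IsLUB ({z, x} : Set α) j

/-- `l` is ∨-irreducible: `l` is not the minimum element, and whenever `l` is the join
of `a` and `b`, `l = a` or `l = b`. -/
def JoinIrred {α : Type*} [Preorder α] (l : α) : Prop :=
  (¬ ∀ x, l ≤ x) ∧ ∀ a b, IsLUB ({a, b} : Set α) l → l = a ∨ l = b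

/-- A modular semilattice: (existing joins witness that) every principal ideal is a
(modular) lattice, the modular law holds in every principal ideal, and the join of any
three elements exists whenever the three pairwise joins exist. -/
def ModularSemilattice (α : Type*) [SemilatticeInf α] : Prop :=
  (∀ a b : α, (∃ u, a ≤ u ∧ b ≤ u) → JoinExists a b) ∧
  (∀ x a b c : α, a ≤ x → b ≤ x → c ≤ x → a ≤ c →
    ∀ j, IsLUB ({a, b} : Set α) j → IsLUB ({a, b ⊓ c} : Set α) (j ⊓ c)) ∧
  (∀ x y z : α, JoinExists x y → JoinExists y z → JoinExists z x →
    ∃ j, IsLUB ({x, y, z} : Set α) j)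
/-- A PPIP: a poset (given by `le`) with a symmetric inconsistency relation `ic` and a
symmetric collinearity relation `C` satisfying (IC1), (IC2), (CT1), (CT2), Regularity,
weak Triangle, (CC1) and (CC2). -/
structure IsPPIP (P : Type*) (le : P → P → Prop) (ic : P → P → Prop)
    (C : P → P → P → Prop) : Prop where
  le_refl : ∀ p, le p p
  le_trans : ∀ p q r, le p q → le q r → le p r
  le_antisymm : ∀ p q, le p q → le q p → p = q
  ic_symm : ∀ p q, ic p q → ic q p
  c_symm_left : ∀ p q r, C p q r → C q p r
  c_symm_right : ∀ p q r, C p q r → C p r q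
  ic1 : ∀ p q, ic p q → ¬ ∃ w, le p w ∧ le q w
  ic2 : ∀ p q p' q', ic p q → le p p' → le q q' → ic p' q'
  ct1 : ∀ p q r, C p q r →
    (¬ le p q ∧ ¬ le q p) ∧ (¬ le q r ∧ ¬ le r q) ∧ (¬ le r p ∧ ¬ le p r)
  ct2 : ∀ p q r w, C p q r → le p w → le q w → le r w
  regularity : ∀ p q r r', C p q r → le r' r → ¬ le r' p → ¬ le r' q →
    ∃ p' q', le p' p ∧ le q' q ∧ C p' q' r'
  weak_triangle : ∀ a b c p q, C a c p → C b c q →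
    (∀ u v, u ∈ ({a, b, c, p, q} : Set P) → v ∈ ({a, b, c, p, q} : Set P) → ¬ ic u v) →
    ((∃ x, C a b x ∧ C p q x ∧
        List.Pairwise (fun u v => ¬ le u v ∧ ¬ le v u) [a, b, c, p, q, x] ∧
        (∀ u v w, u ∈ ({a, b, c, p, q, x} : Set P) → v ∈ ({a, b, c, p, q, x} : Set P) →
          w ∈ ({a, b, c, p, q, x} : Set P) → C u v w →
          ({u, v, w} : Multiset P) = {a, c, p} ∨ ({u, v, w} : Multiset P) = {b, c, q} ∨
          ({u, v, w} : Multiset P) = {a, b, x} ∨ ({u, v, w} : Multiset P) = {p, q, x})) ∨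
      (∃ a', le a' a ∧ C b q a') ∨
      C b q p ∨
      (∃ a' p', le a' a ∧ le p' p ∧ C q a' p') ∨
      (le q a ∨ le q p))
  cc1 : ∀ p q r, C p q r → ¬ ic p q ∧ ¬ ic q r ∧ ¬ ic r p
  cc2 : ∀ p q r x, C p q r →
    ((ic x p ∧ ic x q) ∨ (ic x q ∧ ic x r) ∨ (ic x p ∧ ic x r)) ∨
    (¬ ic x p ∧ ¬ ic x q ∧ ¬ ic x r)
/-- The poset of ∨-irreducible elements of `L`. -/
abbrev Irr (L : Type*) [SemilatticeInf L] := {l : L // JoinIrred l}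

/-- `φ(l) = {p ∈ Lⁱʳ : p ≤ l}`. -/
def phiMap (L : Type*) [SemilatticeInf L] (l : L) : Set (Irr L) :=
  {p : Irr L | (p : L) ≤ l}

/-- The induced order on `Lⁱʳ`. -/
def indLE (L : Type*) [SemilatticeInf L] : Irr L → Irr L → Prop :=
  fun p q => p ≤ q

/-- The induced inconsistency relation on `Lⁱʳ`: `p ⌣ q` iff `p ∨ q` does not exist. -/
def indIC (L : Type*) [SemilatticeInf L] : Irr L → Irr L → Prop :=
  fun p q => ¬ JoinExists (p : L) (q : L)

/-- The induced collinearity relation on `Lⁱʳ`. -/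
def indC (L : Type*) [SemilatticeInf L] : Irr L → Irr L → Irr L → Prop :=
  fun p q r => Collinear3 (p : L) (q : L) (r : L)

section Lattice

variable {M : Type*} [Lattice M]

theorem exists_supIrred_le_not_le [Finite M] {z w : M} (h : ¬ z ≤ w) :
    ∃ x, SupIrred x ∧ x ≤ z ∧ ¬ x ≤ w := by
  obtain ⟨x, hx⟩ := (Set.toFinite {x : M | x ≤ z ∧ ¬ x ≤ w}).exists_minimal ⟨z, le_rfl, h⟩
  refine ⟨x, ⟨fun hmin => hx.prop.2 ((hmin inf_le_left).trans inf_le_right), ?_⟩, hx.prop⟩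
  intro s t hst
  have key : ∀ y, y ≤ x → y ≠ x → y ≤ w := fun y hy hne => by
    by_contra hyw
    exact hne (le_antisymm hy (hx.le_of_le ⟨hy.trans hx.prop.1, hyw⟩ hy))
  by_contra! hne
  refine hx.prop.2 (hst ▸ sup_le (key s ?_ hne.1) (key t ?_ hne.2))
  · exact hst ▸ le_sup_left
  · exact hst ▸ le_sup_right

theorem SupIrred.exists_lower [Finite M] {a : M} (ha : SupIrred a) :
    ∃ d, d ≤ a ∧ ¬ a ≤ d ∧ ∀ z, ¬ a ≤ z → a ⊓ z ≤ d := by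
  have hne : {z : M | z < a}.Nonempty := by
    by_contra hempty
    refine ha.1 fun b hb => ?_
    by_contra hab
    exact hempty ⟨b, lt_of_le_not_ge hb hab⟩
  obtain ⟨d, hd⟩ := (Set.toFinite {z : M | z < a}).exists_maximal hne
  have hda : d < a := hd.prop
  refine ⟨d, hda.le, hda.not_ge, fun z hz => ?_⟩
  have hlt : a ⊓ z < a := lt_of_le_of_ne inf_le_left fun h => hz (inf_eq_left.1 h)
  have hsup : a ⊓ z ⊔ d < a := by
    refine lt_of_le_of_ne (sup_le hlt.le hda.le) fun h => ?_
    rcases ha.2 h with h | h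
    · exact hlt.ne h
    · exact hda.ne h
  exact le_sup_left.trans (hd.le_of_ge hsup le_sup_right)

theorem collinear3_iff {x y z : M} :
    Collinear3 x y z ↔ Incomp x y ∧ Incomp y z ∧ Incomp z x ∧ x ⊔ y = y ⊔ z ∧ y ⊔ z = z ⊔ x := by
  refine and_congr_right' (and_congr_right' (and_congr_right' ⟨?_, ?_⟩))
  · rintro ⟨j, h₁, h₂, h₃⟩
    rw [isLUB_pair.unique h₁, isLUB_pair.unique h₂, isLUB_pair.unique h₃]
    exact ⟨rfl, rfl⟩
  · rintro ⟨h₁, h₂⟩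
    exact ⟨x ⊔ y, isLUB_pair, h₁ ▸ isLUB_pair, (h₁.trans h₂) ▸ isLUB_pair⟩

/-- A line `a, c, p` with join `l`, together with an element `n` such that `[n, l]` has length two
and everything strictly below one of the three points lies below `n`. -/
structure Line (a c p n l : M) : Prop where
  sup_ac : a ⊔ c = l
  sup_ap : a ⊔ p = l
  sup_cp : c ⊔ p = l
  n_le : n ≤ l
  a_c : ¬ a ≤ c ⊔ n
  a_p : ¬ a ≤ p ⊔ n
  c_a : ¬ c ≤ a ⊔ n
  c_p : ¬ c ≤ p ⊔ n
  p_a : ¬ p ≤ a ⊔ n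
  p_c : ¬ p ≤ c ⊔ n
  low_a : ∀ z, ¬ a ≤ z → a ⊓ z ≤ n
  low_c : ∀ z, ¬ c ≤ z → c ⊓ z ≤ n
  low_p : ∀ z, ¬ p ≤ z → p ⊓ z ≤ n

theorem Line.flip {a c p n l : M} (h : Line a c p n l) : Line p c a n l where
  sup_ac := (sup_comm _ _).trans h.sup_cp
  sup_ap := (sup_comm _ _).trans h.sup_ap
  sup_cp := (sup_comm _ _).trans h.sup_ac
  n_le := h.n_le
  a_c := h.p_c
  a_p := h.p_a
  c_a := h.c_p
  c_p := h.c_a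
  p_a := h.a_p
  p_c := h.a_c
  low_a := h.low_p
  low_c := h.low_c
  low_p := h.low_a

/-- Two lines through `c` spanning a plane: `[n ⊔ k, l ⊔ m]` has length three. -/
structure Plane (a b c p q n k l m : M) : Prop where
  line₁ : Line a c p n l
  line₂ : Line b c q k m
  inf₁ : l ⊓ k ≤ n
  inf₂ : m ⊓ n ≤ k
  not_le₁ : ¬ b ≤ l
  not_le₂ : ¬ a ≤ m

theorem Plane.not_q_le {a b c p q n k l m : M} (h : Plane a b c p q n k l m) : ¬ q ≤ l := fun hq =>
  h.not_le₁ ((h.line₂.sup_ac ▸ le_sup_left : b ≤ m).trans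
    (h.line₂.sup_cp ▸ sup_le (h.line₁.sup_ac ▸ le_sup_right) hq))

theorem Plane.swap {a b c p q n k l m : M} (h : Plane a b c p q n k l m) : Plane b a c q p k n m l :=
  ⟨h.line₂, h.line₁, h.inf₂, h.inf₁, h.not_le₂, h.not_le₁⟩

theorem Plane.flip {a b c p q n k l m : M} (h : Plane a b c p q n k l m) : Plane p q c a b n k l m :=
  ⟨h.line₁.flip, h.line₂.flip, h.inf₁, h.inf₂, h.not_q_le, h.swap.not_q_le⟩

/-- The lines of the complete quadrilateral with vertices `a, b, c, p, q, x`, in this order. -/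
def quadLine : Fin 4 → Finset (Fin 6) := ![{0, 2, 3}, {1, 2, 4}, {0, 1, 5}, {3, 4, 5}]

theorem not_le_of_quadLine {P : Type*} [Preorder P] {f : Fin 6 → P} {J : Fin 4 → P}
    (hJ : ∀ i j, f i ≤ J j ↔ i ∈ quadLine j) {i j : Fin 6} (hij : i ≠ j) : ¬ f i ≤ f j := by
  intro hle
  have hsub : ∀ k, j ∈ quadLine k → i ∈ quadLine k := fun k hk =>
    (hJ i k).1 (hle.trans ((hJ j k).2 hk))
  clear hle
  revert i j
  decide

variable [IsModularLattice M]

theorem supIrred_of_minimal_le_sup {r x y : M} (hr : SupIrred r) (hry : ¬ r ≤ y)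
    (hx : r ≤ x ⊔ y) (hmin : ∀ z, z ≤ x → r ≤ z ⊔ y → x ≤ z) :
    SupIrred x ∧ x ⊔ y = r ⊔ y := by
  have hle : x ≤ y ⊔ r := by
    refine (hmin (x ⊓ (y ⊔ r)) inf_le_left ?_).trans inf_le_right
    calc r ≤ (y ⊔ x) ⊓ (y ⊔ r) := le_inf (hx.trans (sup_comm _ _).le) le_sup_right
      _ = y ⊔ x ⊓ (y ⊔ r) := sup_inf_assoc_of_le _ le_sup_left
      _ = _ := sup_comm _ _
  have heq : x ⊔ y = r ⊔ y :=
    le_antisymm (sup_le (hle.trans (sup_comm _ _).le) le_sup_right) (sup_le hx le_sup_right)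
  refine ⟨⟨fun h => hry ?_, fun s t hst => ?_⟩, heq⟩
  · exact hx.trans (sup_le ((h inf_le_left).trans inf_le_right) le_rfl)
  · have hs : s ≤ x := hst ▸ le_sup_left
    have ht : t ≤ x := hst ▸ le_sup_right
    have back : ∀ w, w ≤ x → w ⊔ y = r ⊓ (w ⊔ y) ⊔ y := fun w hw => by
      calc w ⊔ y = (y ⊔ r) ⊓ (w ⊔ y) :=
            (inf_eq_right.2 (sup_le (hw.trans hle) le_sup_left)).symm
        _ = y ⊔ r ⊓ (w ⊔ y) := sup_inf_assoc_of_le _ le_sup_right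
        _ = _ := sup_comm _ _
    have hr' : r ⊓ (s ⊔ y) ⊔ r ⊓ (t ⊔ y) = r := by
      refine le_antisymm (sup_le inf_le_left inf_le_left) ?_
      have h₁ : r ≤ (r ⊓ (s ⊔ y) ⊔ r ⊓ (t ⊔ y)) ⊔ y := by
        calc r ≤ x ⊔ y := hx
          _ = (s ⊔ y) ⊔ (t ⊔ y) := by rw [← hst, sup_sup_distrib_right]
          _ = (r ⊓ (s ⊔ y) ⊔ y) ⊔ (r ⊓ (t ⊔ y) ⊔ y) := by rw [← back s hs, ← back t ht]
          _ = _ := by rw [← sup_sup_distrib_right]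
      calc r = ((r ⊓ (s ⊔ y) ⊔ r ⊓ (t ⊔ y)) ⊔ y) ⊓ r := (inf_eq_right.2 h₁).symm
        _ = (r ⊓ (s ⊔ y) ⊔ r ⊓ (t ⊔ y)) ⊔ y ⊓ r :=
          sup_inf_assoc_of_le _ (sup_le inf_le_left inf_le_left)
        _ ≤ _ := sup_le le_rfl
          (le_sup_of_le_left (le_inf inf_le_right (inf_le_left.trans le_sup_right)))
    rcases hr.2 hr' with h | h
    · exact Or.inl (le_antisymm hs (hmin s hs (inf_eq_left.1 h)))
    · exact Or.inr (le_antisymm ht (hmin t ht (inf_eq_left.1 h)))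

theorem exists_collinear3_of_le_sup [Finite M] {r x y : M} (hr : SupIrred r) (h : r ≤ x ⊔ y)
    (hx : ¬ r ≤ x) (hy : ¬ r ≤ y) :
    ∃ p q, SupIrred p ∧ SupIrred q ∧ p ≤ x ∧ q ≤ y ∧ Collinear3 p q r := by
  obtain ⟨p, hp⟩ := (Set.toFinite {z : M | z ≤ x ∧ r ≤ z ⊔ y}).exists_minimal ⟨x, le_rfl, h⟩
  obtain ⟨q, hq⟩ := (Set.toFinite {z : M | z ≤ y ∧ r ≤ p ⊔ z}).exists_minimal
    ⟨y, le_rfl, hp.prop.2⟩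
  have hrp : ¬ r ≤ p := fun h => hx (h.trans hp.prop.1)
  have hrq : ¬ r ≤ q := fun h => hy (h.trans hq.prop.1)
  obtain ⟨pirr, hpq⟩ := supIrred_of_minimal_le_sup hr hrq hq.prop.2 fun z hz hrz =>
    hp.le_of_le ⟨hz.trans hp.prop.1, hrz.trans (sup_le_sup_left hq.prop.1 z)⟩ hz
  obtain ⟨qirr, hqp⟩ := supIrred_of_minimal_le_sup hr hrp (hq.prop.2.trans (sup_comm _ _).le)
    fun z hz hrz => hq.le_of_le ⟨hz.trans hq.prop.1, hrz.trans (sup_comm _ _).le⟩ hz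
  have hne : r ≠ p ⊔ q := fun e => by
    rcases hr.2 e.symm with h | h
    · exact hrp h.ge
    · exact hrq h.ge
  refine ⟨p, q, pirr, qirr, hp.prop.1, hq.prop.1, collinear3_iff.2
    ⟨⟨fun hle => hrq ?_, fun hle => hrp ?_⟩, ⟨fun hle => hne ?_, hrq⟩, ⟨hrp, fun hle => hne ?_⟩,
      hpq.trans (sup_comm _ _), ?_⟩⟩
  · exact hq.prop.2.trans (sup_le hle le_rfl)
  · exact hq.prop.2.trans (sup_le le_rfl hle)
  · rw [hpq, sup_eq_left.2 hle]
  · rw [sup_comm p q, hqp, sup_eq_left.2 hle]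
  · rw [sup_comm q r, ← hpq, sup_comm p q, hqp]

theorem not_le_sup_lower {a a' c : M} (ha' : a' ≤ a) (h : ¬ a ≤ a')
    (hl : ∀ z, ¬ a ≤ z → a ⊓ z ≤ a') (hac : ¬ a ≤ c) : ¬ a ≤ c ⊔ a' := fun hle => by
  refine h ?_
  calc a = (a' ⊔ c) ⊓ a := (inf_eq_right.2 (hle.trans (sup_comm _ _).le)).symm
    _ = a' ⊔ c ⊓ a := sup_inf_assoc_of_le _ ha'
    _ ≤ a' := sup_le le_rfl (inf_comm c a ▸ hl c hac)

theorem le_sup_lower {a n c t : M} (hl : ∀ z, ¬ a ≤ z → a ⊓ z ≤ n) (hct : c ≤ t)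
    (htl : t ≤ c ⊔ a) (hat : ¬ a ≤ t) : t ≤ c ⊔ n := by
  calc t = (c ⊔ a) ⊓ t := (inf_eq_right.2 htl).symm
    _ = c ⊔ a ⊓ t := sup_inf_assoc_of_le _ hct
    _ ≤ c ⊔ n := sup_le_sup_left (hl t hat) c

theorem lower_le_sup_lower {a c p a' c' p' l : M} (hac : a ⊔ c = l) (hap : a ⊔ p = l)
    (hcp : c ⊔ p = l) (nca : ¬ c ≤ a) (npa : ¬ p ≤ a) (npc : ¬ p ≤ c)
    (ha : a' ≤ a) (hc : c' ≤ c) (hp : p' ≤ p) (hpp : ¬ p ≤ p')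
    (la : ∀ z, ¬ a ≤ z → a ⊓ z ≤ a') (lc : ∀ z, ¬ c ≤ z → c ⊓ z ≤ c')
    (lp : ∀ z, ¬ p ≤ z → p ⊓ z ≤ p') : p' ≤ a' ⊔ c' := by
  have h₁ : a ⊔ p' ≤ a ⊔ c' := by
    refine le_sup_lower lc le_sup_left
      (sup_le le_sup_left (hp.trans (hac ▸ hap ▸ le_sup_right))) fun h => ?_
    refine not_le_sup_lower hp hpp lp npa (le_trans ?_ (sup_le le_sup_left h))
    exact hac ▸ hap ▸ le_sup_right
  have h₂ : c ⊔ p' ≤ c ⊔ a' := by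
    refine le_sup_lower la le_sup_left ?_ fun h => ?_
    · refine sup_le le_sup_left (hp.trans ?_)
      rw [sup_comm, hac, ← hcp]
      exact le_sup_right
    · refine not_le_sup_lower hp hpp lp npc (le_trans ?_ (sup_le h le_sup_left))
      rw [hac, ← hcp]
      exact le_sup_right
  calc p' ≤ (a' ⊔ c) ⊓ (a ⊔ c') :=
        le_inf (le_sup_right.trans (h₂.trans (sup_comm _ _).le)) (le_sup_right.trans h₁)
    _ = a' ⊔ c ⊓ (a ⊔ c') := sup_inf_assoc_of_le _ (ha.trans le_sup_left)
    _ = a' ⊔ (c' ⊔ a) ⊓ c := by rw [inf_comm, sup_comm a c']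
    _ = a' ⊔ (c' ⊔ a ⊓ c) := by rw [sup_inf_assoc_of_le _ hc]
    _ ≤ a' ⊔ c' := sup_le_sup_left (sup_le le_rfl (inf_comm a c ▸ lc a nca)) a'

theorem Line.exists_of_collinear3 [Finite M] {a c p : M} (ha : SupIrred a) (hc : SupIrred c)
    (hp : SupIrred p) (h : Collinear3 a c p) : ∃ n, Line a c p n (a ⊔ c) := by
  obtain ⟨⟨nac, nca⟩, ⟨ncp, npc⟩, ⟨npa, nap⟩, e₁, e₂⟩ := collinear3_iff.1 h
  obtain ⟨a', ha', haa, la⟩ := ha.exists_lower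
  obtain ⟨c', hc', hcc, lc⟩ := hc.exists_lower
  obtain ⟨p', hp', hpp, lp⟩ := hp.exists_lower
  have hcp : c ⊔ p = a ⊔ c := e₁.symm
  have hap : a ⊔ p = a ⊔ c := by rw [e₁, e₂, sup_comm]
  have hpn := lower_le_sup_lower rfl hap hcp nca npa npc ha' hc' hp' hpp la lc lp
  have hcn : c' ≤ a' ⊔ p' := lower_le_sup_lower hap rfl ((sup_comm _ _).trans hcp) npa nca ncp
    ha' hp' hc' hcc la lp lc
  have han : a' ≤ c' ⊔ p' := lower_le_sup_lower hcp ((sup_comm _ _).trans rfl)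
    ((sup_comm _ _).trans hap) npc nac nap hc' hp' ha' haa lc lp la
  have key : ∀ {x y x' y' : M}, ¬ x ≤ x' → x' ≤ x → (∀ z, ¬ x ≤ z → x ⊓ z ≤ x') → ¬ x ≤ y →
      y' ≤ y → a' ⊔ c' ≤ y' ⊔ x' → ¬ x ≤ y ⊔ (a' ⊔ c') := by
    intro x y x' y' h₁ h₂ h₃ h₄ h₅ h₆ hle
    exact not_le_sup_lower h₂ h₁ h₃ h₄
      (hle.trans (sup_le le_sup_left (h₆.trans (sup_le_sup_right h₅ x'))))
  exact ⟨a' ⊔ c', {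
    sup_ac := rfl
    sup_ap := hap
    sup_cp := hcp
    n_le := sup_le_sup ha' hc'
    a_c := key haa ha' la nac hc' (sup_comm _ _).le
    a_p := key haa ha' la nap hp' (sup_le le_sup_right (hcn.trans (sup_comm _ _).le))
    c_a := key hcc hc' lc nca ha' le_rfl
    c_p := key hcc hc' lc ncp hp' (sup_le (han.trans (sup_comm _ _).le) le_sup_right)
    p_a := key hpp hp' lp npa ha' (sup_le le_sup_left hcn)
    p_c := key hpp hp' lp npc hc' (sup_le han le_sup_left)
    low_a := fun z hz => (la z hz).trans le_sup_left
    low_c := fun z hz => (lc z hz).trans le_sup_right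
    low_p := fun z hz => (lp z hz).trans hpn }⟩

theorem Line.sup_eq {a c p n l z : M} (h : Line a c p n l) (hz : z ≤ c ⊔ n) (hn : ¬ z ≤ n) :
    a ⊔ z = l := by
  have hzl : z ≤ l := hz.trans (sup_le (h.sup_ac ▸ le_sup_right) h.n_le)
  have hal : a ≤ l := h.sup_ac ▸ le_sup_left
  refine le_antisymm (sup_le hal hzl) ?_
  suffices hc : c ≤ a ⊔ z from h.sup_ac ▸ sup_le le_sup_left hc
  by_contra hc
  have h₁ : a ⊔ z ≤ a ⊔ n :=
    le_sup_lower h.low_c le_sup_left (h.sup_ac ▸ sup_le hal hzl) hc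
  refine hn ?_
  calc z ≤ (n ⊔ a) ⊓ (c ⊔ n) := le_inf (le_sup_right.trans (h₁.trans (sup_comm _ _).le)) hz
    _ = n ⊔ a ⊓ (c ⊔ n) := sup_inf_assoc_of_le _ le_sup_right
    _ ≤ n := sup_le le_rfl (h.low_a _ h.a_c)

theorem Line.collinear3 {b c q n m z : M} (h : Line b c q n m) (hz : z ≤ c ⊔ n)
    (hn : ¬ z ≤ n) : Collinear3 b q z := by
  have e₁ := h.sup_eq hz hn
  have e₂ := h.flip.sup_eq hz hn
  refine collinear3_iff.2 ⟨⟨fun hle => h.a_p (hle.trans le_sup_left),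
    fun hle => h.p_a (hle.trans le_sup_left)⟩, ⟨fun hle => h.p_c (hle.trans hz), fun hle => ?_⟩,
    ⟨fun hle => ?_, fun hle => h.a_c (hle.trans hz)⟩, h.sup_ap.trans e₂.symm,
    e₂.trans (e₁.symm.trans (sup_comm _ _))⟩
  · rw [sup_eq_left.2 hle] at e₂
    exact h.c_p ((h.sup_ac ▸ le_sup_right : c ≤ m).trans (e₂ ▸ le_sup_left))
  · rw [sup_eq_left.2 hle] at e₁
    exact h.c_a ((h.sup_ac ▸ le_sup_right : c ≤ m).trans (e₁ ▸ le_sup_left))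

namespace Plane

variable {a b c p q n k l m : M}

theorem not_q_le_sup (h : Plane a b c p q n k l m) : ¬ q ≤ l ⊔ (n ⊔ k) := fun hq => by
  have hqm : q ≤ m := h.line₂.sup_cp ▸ le_sup_right
  have hml : m ⊓ l ≤ c ⊔ k := by
    refine (inf_comm m l).le.trans (le_sup_lower h.line₂.low_a (le_inf ?_ ?_) ?_ fun hb =>
      h.not_le₁ (hb.trans inf_le_left))
    · exact h.line₁.sup_ac ▸ le_sup_right
    · exact h.line₂.sup_ac ▸ le_sup_right
    · exact inf_le_right.trans (h.line₂.sup_ac.ge.trans (sup_comm _ _).le)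
  refine h.line₂.p_c ?_
  calc q ≤ (k ⊔ l) ⊓ m := le_inf (hq.trans (sup_le le_sup_right
          (sup_le (h.line₁.n_le.trans le_sup_right) le_sup_left))) hqm
    _ = k ⊔ l ⊓ m := sup_inf_assoc_of_le _ h.line₂.n_le
    _ ≤ c ⊔ k := sup_le le_sup_right (inf_comm l m ▸ hml)

theorem not_a_le (h : Plane a b c p q n k l m) : ¬ a ≤ p ⊔ q ⊔ (n ⊔ k) := fun ha => by
  have hpl : p ≤ l := h.line₁.sup_ap ▸ le_sup_right
  have hal : a ≤ l := h.line₁.sup_ap ▸ le_sup_left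
  have h₁ : a ≤ p ⊔ (n ⊔ k) := by
    calc a ≤ (p ⊔ (n ⊔ k) ⊔ q) ⊓ (l ⊔ (n ⊔ k)) :=
          le_inf (ha.trans (sup_right_comm _ _ _).le) (hal.trans le_sup_left)
      _ = p ⊔ (n ⊔ k) ⊔ q ⊓ (l ⊔ (n ⊔ k)) := sup_inf_assoc_of_le _ (sup_le_sup_right hpl _)
      _ ≤ p ⊔ (n ⊔ k) := sup_le le_rfl ((h.line₂.low_p _ h.not_q_le_sup).trans
          (le_sup_right.trans le_sup_right))
  refine h.line₁.a_p ?_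
  calc a ≤ (p ⊔ n ⊔ k) ⊓ l := le_inf (h₁.trans (sup_assoc _ _ _).ge) hal
    _ = p ⊔ n ⊔ k ⊓ l := sup_inf_assoc_of_le _ (sup_le hpl h.line₁.n_le)
    _ ≤ p ⊔ n := sup_le le_rfl ((inf_comm k l).le.trans (h.inf₁.trans le_sup_right))

theorem sup_eq (h : Plane a b c p q n k l m) {x : M} (hab : x ≤ a ⊔ b) (hpq : x ≤ p ⊔ q)
    (hx : ¬ x ≤ n ⊔ k) : a ⊔ x = a ⊔ b := by
  refine le_antisymm (sup_le le_sup_left hab) (sup_le le_sup_left ?_)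
  by_contra hb
  have h₁ : a ⊔ x ≤ a ⊔ k :=
    le_sup_lower h.line₂.low_a le_sup_left (sup_le le_sup_left hab) hb
  refine hx ?_
  calc x ≤ (n ⊔ k ⊔ a) ⊓ (p ⊔ q ⊔ (n ⊔ k)) :=
        le_inf (le_sup_right.trans (h₁.trans (sup_le le_sup_right
          (le_sup_right.trans le_sup_left)))) (hpq.trans le_sup_left)
    _ = n ⊔ k ⊔ a ⊓ (p ⊔ q ⊔ (n ⊔ k)) := sup_inf_assoc_of_le _ le_sup_right
    _ ≤ n ⊔ k := sup_le le_rfl ((h.line₁.low_a _ h.not_a_le).trans le_sup_left)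

theorem inf_not_le (h : Plane a b c p q n k l m) : ¬ (a ⊔ b) ⊓ (p ⊔ q) ≤ n ⊔ k := fun hle => by
  have hal : a ≤ l := h.line₁.sup_ap ▸ le_sup_left
  have hb : b ≤ a ⊔ (p ⊔ q) := by
    have hc : c ≤ a ⊔ (p ⊔ q) :=
      (h.line₁.sup_ac ▸ le_sup_right : c ≤ l).trans (h.line₁.sup_ap ▸ sup_le_sup_left le_sup_left a)
    exact (h.line₂.sup_ac ▸ le_sup_left : b ≤ m).trans
      (h.line₂.sup_cp ▸ sup_le hc (le_sup_right.trans le_sup_right))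
  refine h.flip.not_q_le_sup ?_
  calc b ≤ (a ⊔ (p ⊔ q)) ⊓ (a ⊔ b) := le_inf hb le_sup_right
    _ = a ⊔ (p ⊔ q) ⊓ (a ⊔ b) := sup_inf_assoc_of_le _ le_sup_left
    _ ≤ l ⊔ (n ⊔ k) := sup_le_sup hal ((inf_comm _ _).le.trans hle)

end Plane

theorem Plane.exists_quadrilateral [Finite M] {a b c p q n k l m : M}
    (h : Plane a b c p q n k l m) :
    ∃ x, SupIrred x ∧ a ⊔ x = a ⊔ b ∧ b ⊔ x = a ⊔ b ∧ p ⊔ x = p ⊔ q ∧ q ⊔ x = p ⊔ q ∧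
      ∀ i j, ![a, b, c, p, q, x] i ≤ ![l, m, a ⊔ b, p ⊔ q] j ↔ i ∈ quadLine j := by
  obtain ⟨x, xirr, hx, hxn⟩ := exists_supIrred_le_not_le h.inf_not_le
  obtain ⟨hab, hpq⟩ := le_inf_iff.1 hx
  have hkn : ¬ x ≤ k ⊔ n := sup_comm n k ▸ hxn
  have ea := h.sup_eq hab hpq hxn
  have ep := h.flip.sup_eq hpq hab hxn
  have eb : b ⊔ x = a ⊔ b :=
    (h.swap.sup_eq (sup_comm a b ▸ hab) (sup_comm p q ▸ hpq) hkn).trans (sup_comm _ _)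
  have eq : q ⊔ x = p ⊔ q :=
    (h.flip.swap.sup_eq (sup_comm p q ▸ hpq) (sup_comm a b ▸ hab) hkn).trans (sup_comm _ _)
  have hal : a ≤ l := h.line₁.sup_ap ▸ le_sup_left
  have hpl : p ≤ l := h.line₁.sup_ap ▸ le_sup_right
  have hcl : c ≤ l := h.line₁.sup_ac ▸ le_sup_right
  have hbm : b ≤ m := h.line₂.sup_ap ▸ le_sup_left
  have hqm : q ≤ m := h.line₂.sup_ap ▸ le_sup_right
  have hcm : c ≤ m := h.line₂.sup_ac ▸ le_sup_right
  have nbl := h.not_le₁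
  have nql := h.not_q_le
  have nxl : ¬ x ≤ l := fun hle => nbl (le_sup_right.trans (ea ▸ sup_le hal hle))
  have nam := h.not_le₂
  have npm := h.swap.not_q_le
  have nxm : ¬ x ≤ m := fun hle => nam (le_sup_left.trans (eb ▸ sup_le hbm hle))
  have nap : ¬ a ≤ p ⊔ q := fun hle => h.not_a_le (hle.trans le_sup_left)
  have npa : ¬ p ≤ a ⊔ b := fun hle => h.flip.not_a_le (hle.trans le_sup_left)
  have nbp : ¬ b ≤ p ⊔ q := fun hle =>
    h.swap.not_a_le ((hle.trans (sup_comm _ _).le).trans le_sup_left)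
  have nqa : ¬ q ≤ a ⊔ b := fun hle =>
    h.flip.swap.not_a_le ((hle.trans (sup_comm _ _).le).trans le_sup_left)
  have nca : ¬ c ≤ a ⊔ b := fun hle => npa (hpl.trans (h.line₁.sup_ac ▸ sup_le le_sup_left hle))
  have ncp : ¬ c ≤ p ⊔ q := fun hle => nap (hal.trans (h.line₁.sup_cp ▸ sup_le hle le_sup_left))
  refine ⟨x, xirr, ea, eb, ep, eq, fun i j => ?_⟩
  fin_cases i <;> fin_cases j <;> simp [quadLine, *]

theorem weak_triangle_lattice [Finite M] {a b c p q : M} (ha : SupIrred a) (hb : SupIrred b)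
    (hc : SupIrred c) (hp : SupIrred p) (hq : SupIrred q) (h₁ : Collinear3 a c p)
    (h₂ : Collinear3 b c q) :
    (∃ x, SupIrred x ∧ a ⊔ x = a ⊔ b ∧ b ⊔ x = a ⊔ b ∧ p ⊔ x = p ⊔ q ∧ q ⊔ x = p ⊔ q ∧
      ∀ i j, ![a, b, c, p, q, x] i ≤ ![a ⊔ c, b ⊔ c, a ⊔ b, p ⊔ q] j ↔ i ∈ quadLine j) ∨
    (∃ a', SupIrred a' ∧ a' ≤ a ∧ Collinear3 b q a') ∨ Collinear3 b q p ∨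
    (∃ a' p', SupIrred a' ∧ SupIrred p' ∧ a' ≤ a ∧ p' ≤ p ∧ Collinear3 a' p' q) ∨
    (q ≤ a ∨ q ≤ p) := by
  obtain ⟨n, H₁⟩ := Line.exists_of_collinear3 ha hc hp h₁
  obtain ⟨k, H₂⟩ := Line.exists_of_collinear3 hb hc hq h₂
  set l := a ⊔ c with hl
  set m := b ⊔ c with hm
  by_cases hqa : q ≤ a
  · tauto
  by_cases hqp : q ≤ p
  · tauto
  by_cases hql : q ≤ l
  · obtain ⟨a', p', h⟩ := exists_collinear3_of_le_sup hq (hql.trans H₁.sup_ap.ge) hqa hqp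
    exact Or.inr (Or.inr (Or.inr (Or.inl ⟨a', p', h⟩)))
  have hcl : c ≤ l := le_sup_right
  have hcm : c ≤ m := le_sup_right
  have hpl : p ≤ l := H₁.sup_ap ▸ le_sup_right
  have hbl : ¬ b ≤ l := fun h =>
    hql ((H₂.sup_ap ▸ le_sup_right : q ≤ m).trans (sup_le h hcl))
  have hd : l ⊓ m ≤ c ⊔ k := le_sup_lower H₂.low_a (le_inf hcl hcm)
    (inf_le_right.trans (sup_comm _ _).le) fun h => hbl (h.trans inf_le_left)
  by_cases ham : a ⊓ m ≤ k
  swap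
  · obtain ⟨a', airr, hle, hn⟩ := exists_supIrred_le_not_le ham
    obtain ⟨hle₁, hle₂⟩ := le_inf_iff.1 hle
    exact Or.inr (Or.inl ⟨a', airr, hle₁,
      H₂.collinear3 ((le_inf (hle₁.trans le_sup_left) hle₂).trans hd) hn⟩)
  by_cases hamle : a ≤ m
  · rw [inf_eq_left.2 hamle] at ham
    have hpm : p ≤ m := hpl.trans (sup_le hamle hcm)
    refine Or.inr (Or.inr (Or.inl (H₂.collinear3 ((le_inf hpl hpm).trans hd) fun hpk => ?_)))
    exact H₂.c_a ((hcl.trans (H₁.sup_ap ▸ sup_le ham hpk)).trans le_sup_right)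
  have hdeq : l ⊓ m = a ⊓ m ⊔ c := by
    rw [hl, sup_comm a c, sup_inf_assoc_of_le _ hcm, sup_comm]
  have hlk : l ⊓ k ≤ n := by
    calc l ⊓ k ≤ (a ⊓ m ⊔ c) ⊓ k :=
          le_inf (hdeq ▸ inf_le_inf_left l H₂.n_le) inf_le_right
      _ = a ⊓ m ⊔ c ⊓ k := sup_inf_assoc_of_le _ ham
      _ ≤ n := sup_le (H₁.low_a _ hamle) (H₁.low_c _ fun h => H₂.c_a (h.trans le_sup_right))
  have hmn : m ⊓ n ≤ k := by
    calc m ⊓ n ≤ (a ⊓ m ⊔ c) ⊓ n :=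
          le_inf (hdeq ▸ le_inf (inf_le_right.trans H₁.n_le) inf_le_left) inf_le_right
      _ = a ⊓ m ⊔ c ⊓ n := sup_inf_assoc_of_le _ (H₁.low_a _ hamle)
      _ ≤ k := sup_le ham (H₂.low_c _ fun h => H₁.c_a (h.trans le_sup_right))
  exact Or.inl (Plane.exists_quadrilateral ⟨H₁, H₂, hlk, hmn, hbl, hamle⟩)

end Lattice

section Ideal

variable {L : Type*} [SemilatticeInf L] {u : L}

theorem isLUB_pair_coe_iff {x y j : Set.Iic u} :
    IsLUB ({(x : L), (y : L)} : Set L) (j : L) ↔ IsLUB ({x, y} : Set (Set.Iic u)) j := by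
  simp only [isLUB_iff_le_iff, upperBounds_insert, upperBounds_singleton, Set.mem_inter_iff,
    Set.mem_Ici]
  refine ⟨fun h b => h b, fun h b => ⟨fun hb => ?_, fun hb => ?_⟩⟩
  · have := (h j).1 le_rfl
    exact ⟨le_trans this.1 hb, le_trans this.2 hb⟩
  · have := (h ⟨b ⊓ u, inf_le_right⟩).2 ⟨le_inf hb.1 x.2, le_inf hb.2 y.2⟩
    exact le_trans (show (j : L) ≤ b ⊓ u from this) inf_le_left

theorem collinear3_coe_iff {x y z : Set.Iic u} :
    Collinear3 (x : L) (y : L) (z : L) ↔ Collinear3 x y z := by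
  refine and_congr_right' (and_congr_right' (and_congr_right' ⟨?_, ?_⟩))
  · rintro ⟨j, h₁, h₂, h₃⟩
    have hj : j ≤ u := h₁.2 (by simp [show (x : L) ≤ u from x.2, show (y : L) ≤ u from y.2])
    lift j to Set.Iic u using hj
    exact ⟨j, isLUB_pair_coe_iff.1 h₁, isLUB_pair_coe_iff.1 h₂, isLUB_pair_coe_iff.1 h₃⟩
  · rintro ⟨j, h₁, h₂, h₃⟩
    exact ⟨j, isLUB_pair_coe_iff.2 h₁, isLUB_pair_coe_iff.2 h₂, isLUB_pair_coe_iff.2 h₃⟩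

theorem joinIrred_coe_iff {x : Set.Iic u} : JoinIrred (x : L) ↔ JoinIrred x := by
  refine and_congr (not_congr ⟨fun h y => h y, fun h y => ?_⟩) ⟨fun h a b hab => ?_,
    fun h a b hab => ?_⟩
  · exact le_trans (show (x : L) ≤ y ⊓ u from h ⟨y ⊓ u, inf_le_right⟩) inf_le_left
  · simpa [Subtype.ext_iff] using h a b (isLUB_pair_coe_iff.2 hab)
  · have ha : a ≤ u := (hab.1 (by simp)).trans x.2
    have hb : b ≤ u := (hab.1 (by simp)).trans x.2
    lift a to Set.Iic u using ha
    lift b to Set.Iic u using hb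
    simpa [Subtype.ext_iff] using h a b (isLUB_pair_coe_iff.1 hab)

theorem joinIrred_iff_supIrred {M : Type*} [Lattice M] {x : M} : JoinIrred x ↔ SupIrred x := by
  refine and_congr (not_congr ⟨fun h y _ => h y, fun h y => (h inf_le_left).trans inf_le_right⟩)
    ⟨fun h a b hab => ?_, fun h a b hab => ?_⟩
  · have := h a b (hab ▸ isLUB_pair)
    tauto
  · have := h (isLUB_pair.unique hab)
    tauto

namespace ModularSemilattice

theorem joinExists (hL : ModularSemilattice L) {x y w : L} (hx : x ≤ w) (hy : y ≤ w) :
    JoinExists x y := hL.1 x y ⟨w, hx, hy⟩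

theorem exists_isLUB_Iic (hL : ModularSemilattice L) (x y : Set.Iic u) :
    ∃ j : Set.Iic u, IsLUB {x, y} j := by
  obtain ⟨j, hj⟩ := hL.joinExists x.2 y.2
  have hju : j ≤ u := hj.2 (by simp [show (x : L) ≤ u from x.2, show (y : L) ≤ u from y.2])
  exact ⟨⟨j, hju⟩, isLUB_pair_coe_iff.1 hj⟩

/-- The lattice structure on a principal ideal of a modular semilattice. -/
noncomputable abbrev latticeIic (hL : ModularSemilattice L) (u : L) : Lattice (Set.Iic u) where
  __ := (inferInstance : SemilatticeInf (Set.Iic u))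
  sup x y := (hL.exists_isLUB_Iic x y).choose
  le_sup_left x y := (hL.exists_isLUB_Iic x y).choose_spec.1 (by simp)
  le_sup_right x y := (hL.exists_isLUB_Iic x y).choose_spec.1 (by simp)
  sup_le x y z hx hy := (hL.exists_isLUB_Iic x y).choose_spec.2 (by simp [hx, hy])

theorem isModularLattice_Iic (hL : ModularSemilattice L) (u : L) :
    letI := hL.latticeIic u
    IsModularLattice (Set.Iic u) := by
  let := hL.latticeIic u
  refine ⟨fun {x} y {z} hxz => ?_⟩
  have h : IsLUB {(x : L), (y : L)} ((x ⊔ y : Set.Iic u) : L) := isLUB_pair_coe_iff.2 isLUB_pair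
  have h' : IsLUB {x, y ⊓ z} ((x ⊔ y) ⊓ z) :=
    isLUB_pair_coe_iff.1 (hL.2.1 u x y z x.2 y.2 z.2 hxz _ h)
  exact (h'.unique isLUB_pair).le

end ModularSemilattice

end Ideal

section Semilattice

variable {L : Type*} [SemilatticeInf L]

theorem JoinExists.symm {x y : L} : JoinExists x y → JoinExists y x := by
  rintro ⟨j, hj⟩
  exact ⟨j, Set.pair_comm x y ▸ hj⟩

theorem Incomp.symm {x y : L} (h : Incomp x y) : Incomp y x := ⟨h.2, h.1⟩

theorem Collinear3.rotate {x y z : L} : Collinear3 x y z → Collinear3 y z x := by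
  rintro ⟨h₁, h₂, h₃, j, j₁, j₂, j₃⟩
  exact ⟨h₂, h₃, h₁, j, j₂, j₃, j₁⟩

theorem Collinear3.swap {x y z : L} : Collinear3 x y z → Collinear3 y x z := by
  rintro ⟨h₁, h₂, h₃, j, j₁, j₂, j₃⟩
  exact ⟨h₁.symm, h₃.symm, h₂.symm, j, Set.pair_comm x y ▸ j₁, Set.pair_comm z x ▸ j₃,
    Set.pair_comm y z ▸ j₂⟩

theorem Collinear3.le {x y z w : L} (h : Collinear3 x y z) (hx : x ≤ w) (hy : y ≤ w) :
    z ≤ w := by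
  obtain ⟨-, -, -, j, j₁, j₂, -⟩ := h
  exact (j₂.1 (by simp)).trans (j₁.2 (by simp [hx, hy]))

theorem ModularSemilattice.exists_collinear3_le [Finite L] (hL : ModularSemilattice L)
    {p q r r' : L} (h : Collinear3 p q r) (hr : JoinIrred r') (hle : r' ≤ r) (hp : ¬ r' ≤ p)
    (hq : ¬ r' ≤ q) :
    ∃ p' q', JoinIrred p' ∧ JoinIrred q' ∧ p' ≤ p ∧ q' ≤ q ∧ Collinear3 p' q' r' := by
  obtain ⟨-, -, -, u, hu, hu', -⟩ := h
  let := hL.latticeIic u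
  have := hL.isModularLattice_Iic u
  have hpu : p ≤ u := hu.1 (by simp)
  have hqu : q ≤ u := hu.1 (by simp)
  have hru : r' ≤ u := hle.trans (hu'.1 (by simp))
  lift p to Set.Iic u using hpu
  lift q to Set.Iic u using hqu
  lift r' to Set.Iic u using hru
  have htop : IsLUB {p, q} (⟨u, le_rfl⟩ : Set.Iic u) := isLUB_pair_coe_iff.1 hu
  have hsup : r' ≤ p ⊔ q := (isLUB_pair.unique htop).ge.trans' r'.2
  obtain ⟨p', q', hp', hq', h⟩ := exists_collinear3_of_le_sup
    (joinIrred_iff_supIrred.1 (joinIrred_coe_iff.1 hr)) hsup hp hq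
  exact ⟨p', q', joinIrred_coe_iff.2 (joinIrred_iff_supIrred.2 hp'),
    joinIrred_coe_iff.2 (joinIrred_iff_supIrred.2 hq'), h.1, h.2.1, collinear3_coe_iff.2 h.2.2⟩

theorem ModularSemilattice.weak_triangle [Finite L] (hL : ModularSemilattice L)
    {a b c p q : L} (ha : JoinIrred a) (hb : JoinIrred b) (hc : JoinIrred c) (hp : JoinIrred p)
    (hq : JoinIrred q) (h₁ : Collinear3 a c p) (h₂ : Collinear3 b c q) (hab : JoinExists a b) :
    (∃ x, JoinIrred x ∧ Collinear3 a b x ∧ Collinear3 p q x ∧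
      ∃ J : Fin 4 → L, ∀ i j, ![a, b, c, p, q, x] i ≤ J j ↔ i ∈ quadLine j) ∨
    (∃ a', JoinIrred a' ∧ a' ≤ a ∧ Collinear3 b q a') ∨ Collinear3 b q p ∨
    (∃ a' p', JoinIrred a' ∧ JoinIrred p' ∧ a' ≤ a ∧ p' ≤ p ∧ Collinear3 a' p' q) ∨
    (q ≤ a ∨ q ≤ p) := by
  have hac : JoinExists a c := let ⟨_, _, _, j, h, _⟩ := h₁; ⟨j, h⟩
  have hbc : JoinExists b c := let ⟨_, _, _, j, h, _⟩ := h₂; ⟨j, h⟩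
  obtain ⟨u, hu⟩ := hL.2.2 a b c hab hbc hac.symm
  let := hL.latticeIic u
  have := hL.isModularLattice_Iic u
  have hau : a ≤ u := hu.1 (by simp)
  have hbu : b ≤ u := hu.1 (by simp)
  have hcu : c ≤ u := hu.1 (by simp)
  have hpu : p ≤ u := h₁.le hau hcu
  have hqu : q ≤ u := h₂.le hbu hcu
  lift a to Set.Iic u using hau
  lift b to Set.Iic u using hbu
  lift c to Set.Iic u using hcu
  lift p to Set.Iic u using hpu
  lift q to Set.Iic u using hqu
  have irr : ∀ x : Set.Iic u, JoinIrred (x : L) ↔ SupIrred x := fun x =>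
    joinIrred_coe_iff.trans joinIrred_iff_supIrred
  simp only [irr] at ha hb hc hp hq
  simp only [collinear3_coe_iff] at h₁ h₂
  rcases weak_triangle_lattice ha hb hc hp hq h₁ h₂ with
    ⟨x, xirr, ea, eb, ep, eq, hJ⟩ | ⟨a', hirr, h⟩ | h | ⟨a', p', hirr, hirr', h⟩ | h
  · have inc : ∀ i j, i ≠ j → ¬ ![a, b, c, p, q, x] i ≤ ![a, b, c, p, q, x] j :=
      fun _ _ => not_le_of_quadLine hJ
    refine Or.inl ⟨x, (irr x).2 xirr, collinear3_coe_iff.2 (collinear3_iff.2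
      ⟨⟨inc 0 1 (by decide), inc 1 0 (by decide)⟩, ⟨inc 1 5 (by decide), inc 5 1 (by decide)⟩,
        ⟨inc 5 0 (by decide), inc 0 5 (by decide)⟩, eb.symm, ?_⟩),
      collinear3_coe_iff.2 (collinear3_iff.2
      ⟨⟨inc 3 4 (by decide), inc 4 3 (by decide)⟩, ⟨inc 4 5 (by decide), inc 5 4 (by decide)⟩,
        ⟨inc 5 3 (by decide), inc 3 5 (by decide)⟩, eq.symm, ?_⟩),
      fun j => (![a ⊔ c, b ⊔ c, a ⊔ b, p ⊔ q] j : Set.Iic u), fun i j => ?_⟩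
    · rw [eb, sup_comm x a, ea]
    · rw [eq, sup_comm x p, ep]
    · rw [← hJ i j]
      fin_cases i <;> rfl
  · exact Or.inr (Or.inl ⟨a', (irr a').2 hirr, h.1, collinear3_coe_iff.2 h.2⟩)
  · exact Or.inr (Or.inr (Or.inl (collinear3_coe_iff.2 h)))
  · exact Or.inr (Or.inr (Or.inr (Or.inl ⟨a', p', (irr a').2 hirr, (irr p').2 hirr', h.1, h.2.1,
      collinear3_coe_iff.2 h.2.2⟩)))
  · exact Or.inr (Or.inr (Or.inr (Or.inr h)))

/-- The only collinear triples of a complete quadrilateral are its lines. -/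
theorem exists_quadLine_eq {f : Fin 6 → L} {J : Fin 4 → L}
    (hJ : ∀ i j, f i ≤ J j ↔ i ∈ quadLine j) {i j k : Fin 6}
    (h : Collinear3 (f i) (f j) (f k)) :
    ∃ t, ({i, j, k} : Multiset (Fin 6)) = (quadLine t).val := by
  have hij : i ≠ j := by rintro rfl; exact h.1.1 le_rfl
  have hjk : j ≠ k := by rintro rfl; exact h.2.1.1 le_rfl
  have hki : k ≠ i := by rintro rfl; exact h.2.2.1.1 le_rfl
  have key : ∀ {i j k}, Collinear3 (f i) (f j) (f k) → ∀ t, i ∈ quadLine t → j ∈ quadLine t →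
      k ∈ quadLine t := fun h t hi hj => (hJ _ t).1 (h.le ((hJ _ t).2 hi) ((hJ _ t).2 hj))
  have h₁ := key h
  have h₂ := key h.rotate
  have h₃ := key h.rotate.rotate
  clear h key
  revert i j k
  decide

end Semilattice

/-- For a finite modular semilattice `L`, the poset `Lⁱʳ` of ∨-irreducible elements,
equipped with the induced inconsistency and collinearity relations, is a PPIP. -/
theorem stmt0 (L : Type*) [SemilatticeInf L] [Fintype L]
    (hL : ModularSemilattice L) :
    IsPPIP (Irr L) (indLE L) (indIC L) (indC L) := by
  classical
  have trip : ∀ {p q r : L}, Collinear3 p q r →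
      JoinExists p q ∧ JoinExists q r ∧ JoinExists r p := by
    rintro p q r ⟨-, -, -, j, h₁, h₂, h₃⟩
    exact ⟨⟨j, h₁⟩, ⟨j, h₂⟩, ⟨j, h₃⟩⟩
  have cc : ∀ {p q r x : L}, Collinear3 p q r → JoinExists x p → JoinExists x q →
      JoinExists x r := by
    intro p q r x h hp hq
    obtain ⟨u, hu⟩ := hL.2.2 x p q hp (trip h).1 hq.symm
    exact hL.joinExists (hu.1 (by simp)) (h.le (hu.1 (by simp)) (hu.1 (by simp)))
  exact {
    le_refl := fun p => le_refl p
    le_trans := fun p q r h h' => le_trans (a := p) h h'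
    le_antisymm := fun p q h h' => le_antisymm (a := p) h h'
    ic_symm := fun p q h h' => h h'.symm
    c_symm_left := fun p q r h => h.swap
    c_symm_right := fun p q r h => h.rotate.swap.rotate.rotate
    ic1 := fun p q h ⟨w, hp, hq⟩ => h (hL.joinExists (w := (w : L)) hp hq)
    ic2 := fun p q p' q' h hp hq ⟨j, hj⟩ => h (hL.joinExists (w := j)
      (le_trans (b := (p' : L)) hp (hj.1 (by simp)))
      (le_trans (b := (q' : L)) hq (hj.1 (by simp))))
    ct1 := fun p q r h => ⟨h.1, h.2.1, h.2.2.1⟩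
    ct2 := fun p q r w h hp hq => h.le (w := (w : L)) hp hq
    regularity := fun p q r r' h hr hp hq => by
      obtain ⟨p', q', hp', hq', h⟩ := hL.exists_collinear3_le h r'.2 hr hp hq
      exact ⟨⟨p', hp'⟩, ⟨q', hq'⟩, h⟩
    weak_triangle := fun a b c p q h₁ h₂ hic => by
      have hab : JoinExists (a : L) b := not_not.1 (hic a b (by simp) (by simp))
      rcases hL.weak_triangle a.2 b.2 c.2 p.2 q.2 h₁ h₂ hab with
        ⟨x, hx, h, h', J, hJ⟩ | ⟨a', hirr, h⟩ | h | ⟨a', p', hirr, hirr', h⟩ | h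
      · let f : Fin 6 → Irr L := ![a, b, c, p, q, ⟨x, hx⟩]
        have hf : ∀ i j, (f i : L) ≤ J j ↔ i ∈ quadLine j := fun i j => by
          rw [← hJ i j]
          fin_cases i <;> rfl
        have inc : ∀ i j, i ≠ j → ¬ indLE L (f i) (f j) := fun i j hij =>
          not_le_of_quadLine (f := fun i => (f i : L)) hf hij
        have mem : ∀ u, u ∈ ({a, b, c, p, q, ⟨x, hx⟩} : Set (Irr L)) → ∃ i, f i = u := by
          rintro u (rfl | rfl | rfl | rfl | rfl | rfl)
          exacts [⟨0, rfl⟩, ⟨1, rfl⟩, ⟨2, rfl⟩, ⟨3, rfl⟩, ⟨4, rfl⟩, ⟨5, rfl⟩]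
        refine Or.inl ⟨⟨x, hx⟩, h, h', ?_, fun u v w hu hv hw hC => ?_⟩
        · have hpw : List.Pairwise (fun u v => ¬ indLE L u v ∧ ¬ indLE L v u) (List.ofFn f) :=
            List.pairwise_ofFn.2 fun i j hij => ⟨inc i j hij.ne, inc j i hij.ne'⟩
          simpa [f] using hpw
        · obtain ⟨i, rfl⟩ := mem u hu
          obtain ⟨j, rfl⟩ := mem v hv
          obtain ⟨k, rfl⟩ := mem w hw
          obtain ⟨t, ht⟩ := exists_quadLine_eq (f := fun i => (f i : L)) hf hC
          have hmap : ({f i, f j, f k} : Multiset (Irr L)) = (quadLine t).val.map f := by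
            rw [← ht]
            rfl
          rw [hmap]
          fin_cases t
          exacts [Or.inl rfl, Or.inr (Or.inl rfl), Or.inr (Or.inr (Or.inl rfl)),
            Or.inr (Or.inr (Or.inr rfl))]
      · exact Or.inr (Or.inl ⟨⟨a', hirr⟩, h⟩)
      · exact Or.inr (Or.inr (Or.inl h))
      · exact Or.inr (Or.inr (Or.inr (Or.inl
          ⟨⟨a', hirr⟩, ⟨p', hirr'⟩, h.1, h.2.1, h.2.2.rotate.rotate⟩)))
      · exact Or.inr (Or.inr (Or.inr (Or.inr h)))
    cc1 := fun p q r h => by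
      obtain ⟨h₁, h₂, h₃⟩ := trip h
      exact ⟨not_not.2 h₁, not_not.2 h₂, not_not.2 h₃⟩
    cc2 := fun p q r x h => by
      have h₁ := cc h (x := x)
      have h₂ := cc h.rotate (x := x)
      have h₃ := cc h.rotate.rotate (x := x)
      simp only [indIC]
      tauto }
end

section
/- Let P be a PPIP. Then Csub(P), the family of consistent subspaces of P ordered by inclusion, is a modular semilattice whose meet is set intersection: it is a finite meet-semilattice in which every principal ideal is a modular lattice, and for all X, Y, Z ∈ Csub(P), if the joins X ∨ Y, Y ∨ Z, Z ∨ X exist in Csub(P) then the join X ∨ Y ∨ Z exists. -/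
/-- A consistent subspace: a downward-closed subset, no two of whose elements are
inconsistent, that is closed under the collinearity relation. -/
def IsCSub {P : Type*} (le : P → P → Prop) (ic : P → P → Prop)
    (C : P → P → P → Prop) (X : Set P) : Prop :=
  (∀ p q, le p q → q ∈ X → p ∈ X) ∧
  (∀ p q, p ∈ X → q ∈ X → ¬ ic p q) ∧
  (∀ p q r, p ∈ X → q ∈ X → C p q r → r ∈ X)
theorem IsCSub.inter {P : Type*} {le ic : P → P → Prop} {C : P → P → P → Prop}
    {X Y : Set P} (hX : IsCSub le ic C X) (hY : IsCSub le ic C Y) :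
    IsCSub le ic C (X ∩ Y) :=
  ⟨fun p q h hq => ⟨hX.1 p q h hq.1, hY.1 p q h hq.2⟩,
   fun p q hp hq => hX.2.1 p q hp.1 hq.1,
   fun p q r hp hq hc => ⟨hX.2.2 p q r hp.1 hq.1 hc, hY.2.2 p q r hp.2 hq.2 hc⟩⟩

/-- The family of consistent subspaces, ordered by inclusion, with meet given by
set intersection. -/
instance CsubSemilatticeInf {P : Type*} (le ic : P → P → Prop) (C : P → P → P → Prop) :
    SemilatticeInf {X : Set P // IsCSub le ic C X} :=
  { (inferInstance : PartialOrder {X : Set P // IsCSub le ic C X}) with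
    inf := fun A B => ⟨A.1 ∩ B.1, A.2.inter B.2⟩
    inf_le_left := by
      intro A B
      exact Set.inter_subset_left
    inf_le_right := by
      intro A B
      exact Set.inter_subset_right
    le_inf := by
      intro A B D h1 h2
      exact Set.subset_inter h1 h2 }

namespace IsPPIP

variable {P : Type*} {le ic : P → P → Prop} {C : P → P → P → Prop}

/-- Any consistent set is contained in a least consistent subspace. -/
theorem exists_least_isCSub (h : IsPPIP P le ic C) (S : Set P)
    (hS : ∀ p ∈ S, ∀ q ∈ S, ¬ ic p q) :
    ∃ K, IsCSub le ic C K ∧ S ⊆ K ∧ ∀ W, IsCSub le ic C W → S ⊆ W → K ⊆ W := by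
  let Sub : Set P → Prop := fun W =>
    (∀ p q, le p q → q ∈ W → p ∈ W) ∧ (∀ p q r, p ∈ W → q ∈ W → C p q r → r ∈ W)
  let K : Set P := {x | ∀ W, Sub W → S ⊆ W → x ∈ W}
  have hSK : S ⊆ K := fun x hx W _ hSW => hSW hx
  have perp : ∀ T : Set P, Sub {x | ∀ s ∈ T, ¬ ic s x} := by
    refine fun T => ⟨fun p q hpq hq s hs hsp => hq s hs (h.ic2 _ _ _ _ hsp (h.le_refl s) hpq), ?_⟩
    intro p q r hp hq hC s hs hsr
    have hsp := hp s hs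
    have hsq := hq s hs
    have := h.cc2 p q r s hC
    tauto
  have hKS : S ⊆ {x | ∀ s ∈ K, ¬ ic s x} := fun x hx k hk hkx =>
    hk _ (perp S) (fun p hp q hq => hS q hq p hp) x hx (h.ic_symm _ _ hkx)
  refine ⟨K, ⟨?_, ?_, ?_⟩, hSK, fun W hW hSW x hx => hx W ⟨hW.1, hW.2.2⟩ hSW⟩
  · exact fun p q hpq hq W hW hSW => hW.1 p q hpq (hq W hW hSW)
  · exact fun p q hp hq => hq _ (perp K) hKS p hp
  · exact fun p q r hp hq hC W hW hSW => hW.2 p q r (hp W hW hSW) (hq W hW hSW) hC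

/-- The weak Triangle axiom inside a consistent subspace. -/
theorem triangle (h : IsPPIP P le ic C) {U : Set P} (hU : IsCSub le ic C U) {a b c p q : P}
    (ha : a ∈ U) (hb : b ∈ U) (hc : c ∈ U) (h₁ : C a c p) (h₂ : C b c q) :
    (∃ x, C a b x ∧ C p q x ∧ ¬ le a b ∧ ¬ le p b) ∨ (∃ a', le a' a ∧ C b q a') ∨ C b q p ∨
      (∃ a' p', le a' a ∧ le p' p ∧ C q a' p') ∨ le q a ∨ le q p := by
  have hp := hU.2.2 _ _ _ ha hc h₁
  have hq := hU.2.2 _ _ _ hb hc h₂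
  have hsub : ∀ u ∈ ({a, b, c, p, q} : Set P), u ∈ U := by
    rintro u (rfl | rfl | rfl | rfl | rfl) <;> assumption
  rcases h.weak_triangle a b c p q h₁ h₂
    (fun u v hu hv => hU.2.1 u v (hsub u hu) (hsub v hv)) with ⟨x, hx₁, hx₂, hx, -⟩ | hrest
  · simp only [List.pairwise_cons, List.mem_cons] at hx
    exact Or.inl ⟨x, hx₁, hx₂, (hx.1 b (by simp)).1, (hx.2.1 p (by simp)).2⟩
  · exact Or.inr hrest

/-- Two lines through a common point whose remaining points are comparable coincide. -/
theorem eq_of_collinear_of_le (h : IsPPIP P le ic C) {U : Set P} (hU : IsCSub le ic C U)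
    {a b c p q : P} (hb : b ∈ U) (hc : c ∈ U) (h₁ : C a c p) (h₂ : C b c q)
    (hab : le a b) (hpq : le p q) : p = q := by
  rcases h.triangle hU (hU.1 _ _ hab hb) hb hc h₁ h₂ with
    ⟨x, -, -, hx, -⟩ | ⟨a', ha', hC⟩ | hC | ⟨a', p', -, hp', hC⟩ | hqa | hqp
  · exact absurd hab hx
  · exact absurd (h.le_trans _ _ _ ha' hab) (h.ct1 _ _ _ hC).2.2.1
  · exact absurd hpq (h.ct1 _ _ _ hC).2.1.2
  · exact absurd (h.le_trans _ _ _ hp' hpq) (h.ct1 _ _ _ hC).2.2.1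
  · exact absurd (h.le_trans _ _ _ hqa hab) (h.ct1 _ _ _ h₂).2.2.1
  · exact h.le_antisymm _ _ hpq hqp

/-- The union of `B`, the point `p`, and all third points of lines through `p` and a point
of `B`. -/
def cone (C : P → P → P → Prop) (B : Set P) (p : P) : Set P :=
  {t | t ∈ B ∨ t = p ∨ ∃ b ∈ B, C b p t}

/-- `p` is a minimal element of the complement of `B`. -/
def MinimalOutside (le : P → P → Prop) (B : Set P) (p : P) : Prop :=
  p ∉ B ∧ ∀ q, le q p → q ∉ B → q = p

theorem cone_subset {U B : Set P} (hU : IsCSub le ic C U) (hBU : B ⊆ U) {p : P} (hpU : p ∈ U) :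
    cone C B p ⊆ U := by
  rintro t (ht | rfl | ⟨b, hb, ht⟩)
  · exact hBU ht
  · exact hpU
  · exact hU.2.2 _ _ _ (hBU hb) hpU ht

theorem minimalOutside_of_mem_cone (h : IsPPIP P le ic C) {U B : Set P}
    (hU : IsCSub le ic C U) (hB : IsCSub le ic C B) (hBU : B ⊆ U) {p : P} (hpU : p ∈ U)
    (hp : MinimalOutside le B p) {s : P} (hs : s ∈ cone C B p) (hsB : s ∉ B) :
    MinimalOutside le B s := by
  rcases hs with hs | rfl | ⟨x, hx, hC⟩
  · exact absurd hs hsB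
  · exact hp
  refine ⟨hsB, fun s' hs' hs'B => ?_⟩
  have hs'x : ¬ le s' x := fun hle => hs'B (hB.1 _ _ hle hx)
  have hs'p : ¬ le s' p := fun hle => by
    obtain rfl := hp.2 _ hle hs'B
    exact (h.ct1 _ _ _ hC).2.1.1 hs'
  obtain ⟨x', p', hx', hp', hC'⟩ := h.regularity _ _ _ _ hC hs' hs'x hs'p
  obtain rfl : p' = p := hp.2 _ hp' fun hp'B => hs'B (hB.2.2 _ _ _ (hB.1 _ _ hx' hx) hp'B hC')
  exact h.eq_of_collinear_of_le hU (hBU hx) hpU hC' hC hx' hs'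

/-- A line through a point of `B` and a point of the cone stays in the cone. -/
theorem mem_cone_of_collinear_left (h : IsPPIP P le ic C) {U B : Set P}
    (hU : IsCSub le ic C U) (hB : IsCSub le ic C B) (hBU : B ⊆ U) {p : P} (hpU : p ∈ U)
    (hp : MinimalOutside le B p) {r s t : P} (hr : r ∈ B) (hs : s ∈ cone C B p)
    (hC : C r s t) : t ∈ cone C B p := by
  by_cases hsB : s ∈ B
  · exact Or.inl (hB.2.2 _ _ _ hr hsB hC)
  have hsmin := h.minimalOutside_of_mem_cone hU hB hBU hpU hp hs hsB
  have hsU := cone_subset hU hBU hpU hs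
  rcases hs with hs | rfl | ⟨x, hx, hxs⟩
  · exact absurd hs hsB
  · exact Or.inr (Or.inr ⟨r, hr, hC⟩)
  have no_smaller : ∀ t', le t' t → t' ∉ B → t' = t := by
    intro t' ht' ht'B
    have ht's : ¬ le t' s := fun hle => by
      obtain rfl := hsmin.2 _ hle ht'B
      exact (h.ct1 _ _ _ hC).2.1.1 ht'
    obtain ⟨r', s', hr', hs', hC'⟩ :=
      h.regularity _ _ _ _ hC ht' (fun hle => ht'B (hB.1 _ _ hle hr)) ht's
    obtain rfl : s' = s :=
      hsmin.2 _ hs' fun hs'B => ht'B (hB.2.2 _ _ _ (hB.1 _ _ hr' hr) hs'B hC')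
    exact h.eq_of_collinear_of_le hU (hBU hr) hsU hC' hC hr' ht'
  rcases h.triangle hU (hBU hr) (hBU hx) hsU hC (h.c_symm_right _ _ _ hxs) with
    ⟨y, hy₁, hy₂, -, -⟩ | ⟨r', hr', hC'⟩ | hC' | ⟨r', t', hr', ht', hC'⟩ | hle | hle
  · exact Or.inr (Or.inr ⟨y, hB.2.2 _ _ _ hr hx hy₁,
      h.c_symm_left _ _ _ (h.c_symm_right _ _ _ (h.c_symm_left _ _ _ hy₂))⟩)
  · exact absurd (hB.2.2 _ _ _ hx (hB.1 _ _ hr' hr) (h.c_symm_right _ _ _ hC')) hp.1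
  · exact Or.inr (Or.inr ⟨x, hx, hC'⟩)
  · have hr'B := hB.1 _ _ hr' hr
    have hC'' := h.c_symm_left _ _ _ hC'
    obtain rfl := no_smaller t' ht' fun ht'B =>
      hp.1 (hB.2.2 _ _ _ hr'B ht'B (h.c_symm_right _ _ _ hC''))
    exact Or.inr (Or.inr ⟨r', hr'B, hC''⟩)
  · exact absurd (hB.1 _ _ hle hr) hp.1
  · exact Or.inr (Or.inl (no_smaller p hle hp.1).symm)

/-- A line through the apex and another point of the cone stays in the cone. -/
theorem mem_cone_of_collinear_apex (h : IsPPIP P le ic C) {U B : Set P}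
    (hU : IsCSub le ic C U) (hB : IsCSub le ic C B) (hBU : B ⊆ U) {p : P} (hpU : p ∈ U)
    (hp : MinimalOutside le B p) {x s t : P} (hx : x ∈ B) (hxs : C x p s)
    (hC : C p s t) : t ∈ cone C B p := by
  by_cases htB : t ∈ B
  · exact Or.inl htB
  have hs : s ∈ cone C B p := Or.inr (Or.inr ⟨x, hx, hxs⟩)
  have hsB : s ∉ B := fun hsB => hp.1 (hB.2.2 _ _ _ hx hsB (h.c_symm_right _ _ _ hxs))
  have hsmin := h.minimalOutside_of_mem_cone hU hB hBU hpU hp hs hsB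
  have left {y : P} (hy : le y x) (hC : C y s t) : t ∈ cone C B p :=
    h.mem_cone_of_collinear_left hU hB hBU hpU hp (hB.1 _ _ hy hx) hs hC
  have hsU := cone_subset hU hBU hpU hs
  rcases h.triangle hU (hBU hx) hsU hpU hxs (h.c_symm_left _ _ _ hC) with
    ⟨-, -, -, -, hn⟩ | ⟨x', hx', hC'⟩ | hC' | ⟨x', s', hx', hs', hC'⟩ | hle | hle
  · exact absurd (h.le_refl s) hn
  · exact left hx' (h.c_symm_left _ _ _ (h.c_symm_right _ _ _ hC'))
  · exact absurd (h.le_refl s) (h.ct1 _ _ _ hC').2.2.1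
  · have hC'' := h.c_symm_left _ _ _ hC'
    obtain rfl : s' = s := hsmin.2 _ hs' fun hs'B =>
      htB (hB.2.2 _ _ _ (hB.1 _ _ hx' hx) hs'B (h.c_symm_right _ _ _ hC''))
    exact left hx' (h.c_symm_right _ _ _ hC'')
  · exact absurd (hB.1 _ _ hle hx) htB
  · exact absurd hle (h.ct1 _ _ _ hC).2.1.2

/-- The cone over a consistent subspace with a minimal outside point as apex is a consistent
subspace. -/
theorem isCSub_cone (h : IsPPIP P le ic C) {U B : Set P}
    (hU : IsCSub le ic C U) (hB : IsCSub le ic C B) (hBU : B ⊆ U) {p : P} (hpU : p ∈ U)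
    (hp : MinimalOutside le B p) : IsCSub le ic C (cone C B p) := by
  have hsub := cone_subset hU hBU hpU
  refine ⟨fun q s hqs hs => ?_, fun q s hq hs => hU.2.1 q s (hsub hq) (hsub hs), ?_⟩
  · by_cases hqB : q ∈ B
    · exact Or.inl hqB
    have hsB : s ∉ B := fun hsB => hqB (hB.1 _ _ hqs hsB)
    rwa [(h.minimalOutside_of_mem_cone hU hB hBU hpU hp hs hsB).2 q hqs hqB]
  intro r s t hr hs hC
  by_cases hrB : r ∈ B
  · exact h.mem_cone_of_collinear_left hU hB hBU hpU hp hrB hs hC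
  by_cases hsB : s ∈ B
  · exact h.mem_cone_of_collinear_left hU hB hBU hpU hp hsB hr (h.c_symm_left _ _ _ hC)
  have hsmin := h.minimalOutside_of_mem_cone hU hB hBU hpU hp hs hsB
  have hsU := hsub hs
  have hscone := hs
  rcases hr with hr | rfl | ⟨x, hx, hxr⟩
  · exact absurd hr hrB
  · rcases hs with hs | rfl | ⟨y, hy, hys⟩
    · exact absurd hs hsB
    · exact absurd (h.le_refl _) (h.ct1 _ _ _ hC).1.1
    · exact h.mem_cone_of_collinear_apex hU hB hBU hpU hp hy hys hC
  rcases hs with hs | rfl | ⟨y, hy, hys⟩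
  · exact absurd hs hsB
  · exact h.mem_cone_of_collinear_apex hU hB hBU hpU hp hx hxr (h.c_symm_left _ _ _ hC)
  -- Exchange the apex `p` for `s`.
  have hps : p ∈ cone C B s := Or.inr (Or.inr ⟨y, hy, h.c_symm_right _ _ _ hys⟩)
  rcases h.mem_cone_of_collinear_left hU hB hBU hsU hsmin hx hps hxr with
    hr | rfl | ⟨b, hb, hbr⟩
  · exact absurd hr hrB
  · exact absurd (h.le_refl _) (h.ct1 _ _ _ hC).1.1
  rcases h.mem_cone_of_collinear_apex hU hB hBU hsU hsmin hb hbr (h.c_symm_left _ _ _ hC) with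
    ht | rfl | ⟨b', hb', hbt⟩
  · exact Or.inl ht
  · exact hscone
  · exact h.mem_cone_of_collinear_left hU hB hBU hpU hp hb' hscone hbt

theorem exists_minimalOutside [Finite P] (h : IsPPIP P le ic C) {X Y : Set P}
    (hY : ∀ p q, le p q → q ∈ Y → p ∈ Y) (hYX : ¬ Y ⊆ X) :
    ∃ p ∈ Y, MinimalOutside le X p := by
  let _ : PartialOrder P :=
    { le := le, le_refl := h.le_refl, le_trans := h.le_trans, le_antisymm := h.le_antisymm }
  obtain ⟨p, hp⟩ := (Set.toFinite (Y \ X)).exists_minimal (Set.sdiff_nonempty.2 hYX)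
  exact ⟨p, hp.prop.1, hp.prop.2, fun q hq hqX =>
    h.le_antisymm _ _ hq (hp.le_of_le ⟨hY _ _ hq hp.prop.1, hqX⟩ hq)⟩

/-- If `X ⊆ Z`, the subspaces `Y` and `Z` meet inside `X`, and `z ∈ Z` lies in the join of `X`
and `Y`, then `z ∈ X`. -/
theorem mem_of_mem_join [Finite P] (h : IsPPIP P le ic C) {U Y : Set P}
    (hU : IsCSub le ic C U) (hY : IsCSub le ic C Y) (hYU : Y ⊆ U) {z : P} :
    ∀ X Z : Set P, IsCSub le ic C X → IsCSub le ic C Z → Z ⊆ U → X ⊆ Z → Y ∩ Z ⊆ X →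
      z ∈ Z → (∀ W, IsCSub le ic C W → X ⊆ W → Y ⊆ W → z ∈ W) → z ∈ X := by
  intro X
  induction hn : (Y \ X).ncard using Nat.strong_induction_on generalizing X with
  | _ n ih =>
  intro Z hX hZ hZU hXZ hYZ hz hjoin
  by_cases hYX : Y ⊆ X
  · exact hjoin X hX subset_rfl hYX
  obtain ⟨p, hpY, hpX⟩ := h.exists_minimalOutside hY.1 hYX
  have hpZ : p ∉ Z := fun hpZ => hpX.1 (hYZ ⟨hpY, hpZ⟩)
  have hpZ' : MinimalOutside le Z p :=
    ⟨hpZ, fun q hq hqZ => hpX.2 q hq fun hqX => hqZ (hXZ hqX)⟩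
  have hXX : X ⊆ cone C X p := fun x hx => Or.inl hx
  have hcard : (Y \ cone C X p).ncard < n := by
    rw [← hn]
    refine Set.ncard_lt_ncard ⟨Set.sdiff_subset_sdiff_right hXX, fun hss => ?_⟩ (Set.toFinite _)
    exact (hss ⟨hpY, hpX.1⟩).2 (Or.inr (Or.inl rfl))
  have hz' : z ∈ cone C X p := by
    refine ih _ hcard _ rfl (cone C Z p)
      (h.isCSub_cone hU hX (hXZ.trans hZU) (hYU hpY) hpX)
      (h.isCSub_cone hU hZ hZU (hYU hpY) hpZ') (cone_subset hU hZU (hYU hpY)) ?_ ?_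
      (Or.inl hz) fun W hW hXW hYW => hjoin W hW (hXX.trans hXW) hYW
    · rintro x (hx | hx | ⟨b, hb, hx⟩)
      · exact Or.inl (hXZ hx)
      · exact Or.inr (Or.inl hx)
      · exact Or.inr (Or.inr ⟨b, hXZ hb, hx⟩)
    · rintro x ⟨hxY, hx | hx | ⟨b, hb, hx⟩⟩
      · exact Or.inl (hYZ ⟨hxY, hx⟩)
      · exact Or.inr (Or.inl hx)
      · refine Or.inr (Or.inr ⟨b, hYZ ⟨?_, hb⟩, hx⟩)
        exact hY.2.2 _ _ _ hpY hxY (h.c_symm_right _ _ _ (h.c_symm_left _ _ _ hx))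
  rcases hz' with hz' | rfl | ⟨x, hx, hxz⟩
  · exact hz'
  · exact absurd hz hpZ
  · exact absurd (hZ.2.2 _ _ _ (hXZ hx) hz (h.c_symm_right _ _ _ hxz)) hpZ

end IsPPIP

/-- For a PPIP `P`, the family of consistent subspaces of `P`, ordered by inclusion,
is a finite modular semilattice whose meet is set intersection. -/
theorem stmt2 (P : Type*) [Fintype P] (le ic : P → P → Prop) (C : P → P → P → Prop)
    (h : IsPPIP P le ic C) :
    Finite {X : Set P // IsCSub le ic C X} ∧
    ModularSemilattice {X : Set P // IsCSub le ic C X} ∧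
    (∀ A B : {X : Set P // IsCSub le ic C X},
      ((A ⊓ B : {X : Set P // IsCSub le ic C X}) : Set P) = (A : Set P) ∩ (B : Set P)) := by
  refine ⟨inferInstance, ⟨?_, ?_, ?_⟩, fun _ _ => rfl⟩
  · rintro a b ⟨u, hau, hbu⟩
    have hab : (a.1 ∪ b.1 : Set P) ⊆ u.1 := Set.union_subset hau hbu
    obtain ⟨K, hK, hSK, hmin⟩ := h.exists_least_isCSub (a.1 ∪ b.1)
      fun p hp q hq => u.2.2.1 p q (hab hp) (hab hq)
    refine ⟨⟨K, hK⟩, ?_, fun w hw => hmin w.1 w.2 (Set.union_subset ?_ ?_)⟩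
    · rintro w (rfl | rfl)
      · exact Set.subset_union_left.trans hSK
      · exact Set.subset_union_right.trans hSK
    · exact hw (Set.mem_insert _ _)
    · exact hw (Set.mem_insert_of_mem _ rfl)
  · intro u a b c _ hbu hcu hac j hj
    have haj : a ≤ j := hj.1 (Set.mem_insert _ _)
    have hbj : b ≤ j := hj.1 (Set.mem_insert_of_mem _ rfl)
    refine ⟨?_, fun w hw z hz => ?_⟩
    · rintro w (rfl | rfl)
      · exact le_inf haj hac
      · exact inf_le_inf_right c hbj
    have haw : a ≤ w := hw (Set.mem_insert _ _)
    have hbw : b ⊓ c ≤ w := hw (Set.mem_insert_of_mem _ rfl)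
    refine (h.mem_of_mem_join u.2 b.2 hbu (w.1 ∩ c.1) c.1 (w.2.inter c.2) c.2 hcu
      Set.inter_subset_right (fun x hx => ⟨hbw hx, hx.2⟩) hz.2 fun W hW hX hY => ?_).1
    have hjW : j ≤ ⟨W, hW⟩ := by
      refine hj.2 ?_
      rintro v (rfl | rfl)
      · exact fun x hx => hX ⟨haw hx, hac hx⟩
      · exact hY
    exact hjW hz.1
  · rintro x y z ⟨i, hi⟩ ⟨j, hj⟩ ⟨k, hk⟩
    have hxi : x ≤ i := hi.1 (by simp)
    have hyi : y ≤ i := hi.1 (by simp)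
    have hyj : y ≤ j := hj.1 (by simp)
    have hzj : z ≤ j := hj.1 (by simp)
    have hzk : z ≤ k := hk.1 (by simp)
    have hxk : x ≤ k := hk.1 (by simp)
    obtain ⟨K, hK, hSK, hmin⟩ := h.exists_least_isCSub (x.1 ∪ y.1 ∪ z.1) (by
      rintro p ((hp | hp) | hp) q ((hq | hq) | hq)
      · exact i.2.2.1 p q (hxi hp) (hxi hq)
      · exact i.2.2.1 p q (hxi hp) (hyi hq)
      · exact k.2.2.1 p q (hxk hp) (hzk hq)
      · exact i.2.2.1 p q (hyi hp) (hxi hq)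
      · exact i.2.2.1 p q (hyi hp) (hyi hq)
      · exact j.2.2.1 p q (hyj hp) (hzj hq)
      · exact k.2.2.1 p q (hzk hp) (hxk hq)
      · exact j.2.2.1 p q (hzj hp) (hyj hq)
      · exact j.2.2.1 p q (hzj hp) (hzj hq))
    refine ⟨⟨K, hK⟩, ?_, fun w hw => hmin w.1 w.2 ?_⟩
    · rintro w (rfl | rfl | rfl) p hp
      · exact hSK (Or.inl (Or.inl hp))
      · exact hSK (Or.inl (Or.inr hp))
      · exact hSK (Or.inr hp)
    · rintro p ((hp | hp) | hp)
      · exact hw (show x ∈ _ by simp) hp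
      · exact hw (show y ∈ _ by simp) hp
      · exact hw (show z ∈ _ by simp) hp
end

section
/- Let P be a PPIP. The map f(p) = I_p := {x ∈ P : x ≤ p} is a bijection from P onto the set of ∨-irreducible elements of the modular semilattice Csub(P), and f preserves and reflects all structure: (a) p ≤ q in P iff I_p ⊆ I_q; (b) p ⌣ q in P iff the join I_p ∨ I_q does not exist in Csub(P); (c) C(p,q,r) in P iff I_p, I_q, I_r are pairwise incomparable and the joins I_p ∨ I_q, I_q ∨ I_r, I_r ∨ I_p all exist in Csub(P) and are equal. -/
section Generation

variable {P : Type*} {le ic : P → P → Prop} {C : P → P → P → Prop}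

theorem isCSub_empty : IsCSub le ic C (∅ : Set P) :=
  ⟨fun _ _ _ hq => hq.elim, fun _ _ hp => hp.elim, fun _ _ _ hp => hp.elim⟩

theorem IsPPIP.isCSub_principal (h : IsPPIP P le ic C) (p : P) :
    IsCSub le ic C {x | le x p} :=
  ⟨fun a b hab hb => h.le_trans a b p hab hb,
   fun a b ha hb hab => h.ic1 a b hab ⟨p, ha, hb⟩,
   fun a b r ha hb hC => h.ct2 a b r p hC ha hb⟩

/-- Removing its greatest element from a principal ideal leaves a consistent subspace. -/
theorem IsPPIP.isCSub_strict_principal (h : IsPPIP P le ic C) (p : P) :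
    IsCSub le ic C {x | le x p ∧ x ≠ p} := by
  have hp := h.isCSub_principal p
  refine ⟨fun a b hab hb => ⟨hp.1 a b hab hb.1, ?_⟩,
    fun a b ha hb => hp.2.1 a b ha.1 hb.1,
    fun a b r ha hb hC => ⟨hp.2.2 a b r ha.1 hb.1 hC, ?_⟩⟩
  · rintro rfl
    exact hb.2 (h.le_antisymm _ _ hb.1 hab)
  · rintro rfl
    exact (h.ct1 _ _ _ hC).2.1.1 hb.1

/-- The set of elements consistent with every element of `A`. -/
def consistentWith (ic : P → P → Prop) (A : Set P) : Set P :=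
  {z | ∀ a ∈ A, ¬ ic z a}

/-- The smallest subset containing `A` closed downward and under collinearity. -/
def generated (le : P → P → Prop) (C : P → P → P → Prop) (A : Set P) : Set P :=
  {z | ∀ D : Set P, A ⊆ D → (∀ p q, le p q → q ∈ D → p ∈ D) →
    (∀ p q r, p ∈ D → q ∈ D → C p q r → r ∈ D) → z ∈ D}

theorem subset_generated (A : Set P) : A ⊆ generated le C A :=
  fun _ ha _ hA _ _ => hA ha

theorem generated_subset_of_isCSub {A X : Set P} (hX : IsCSub le ic C X) (hA : A ⊆ X) :
    generated le C A ⊆ X :=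
  fun _ hz => hz X hA hX.1 hX.2.2

theorem IsPPIP.generated_subset_consistentWith (h : IsPPIP P le ic C) {A B : Set P}
    (hAB : A ⊆ consistentWith ic B) : generated le C A ⊆ consistentWith ic B := by
  intro z hz
  refine hz _ hAB ?_ ?_
  · intro p q hpq hq b hb hpb
    exact hq b hb (h.ic2 p b q b hpb hpq (h.le_refl b))
  · intro p q r hp hq hC b hb hrb
    have hpb : ¬ ic b p := fun hbp => hp b hb (h.ic_symm _ _ hbp)
    have hqb : ¬ ic b q := fun hbq => hq b hb (h.ic_symm _ _ hbq)
    have hbr := h.ic_symm _ _ hrb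
    have := h.cc2 p q r b hC
    tauto

theorem IsPPIP.isCSub_generated (h : IsPPIP P le ic C) {A : Set P}
    (hA : A ⊆ consistentWith ic A) : IsCSub le ic C (generated le C A) := by
  have hG := h.generated_subset_consistentWith hA
  have hG' : A ⊆ consistentWith ic (generated le C A) :=
    fun a ha z hz haz => hG hz a ha (h.ic_symm _ _ haz)
  refine ⟨?_, fun p q hp hq => h.generated_subset_consistentWith hG' hp q hq, ?_⟩
  · intro p q hpq hq D hD hdown hcol
    exact hdown p q hpq (hq D hD hdown hcol)
  · intro p q r hp hq hC D hD hdown hcol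
    exact hcol p q r (hp D hD hdown hcol) (hq D hD hdown hcol) hC

theorem IsPPIP.subset_consistentWith_pair (h : IsPPIP P le ic C) {p q : P} (hpq : ¬ ic p q) :
    ({p, q} : Set P) ⊆ consistentWith ic {p, q} := by
  have hself : ∀ a, ¬ ic a a := fun a ha => h.ic1 a a ha ⟨a, h.le_refl a, h.le_refl a⟩
  rintro a (rfl | rfl) b (rfl | rfl)
  · exact hself _
  · exact hpq
  · exact fun hqp => hpq (h.ic_symm _ _ hqp)
  · exact hself _

end Generation

section Projectivity

variable {P : Type*} {le ic : P → P → Prop} {C : P → P → P → Prop}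

/-- The union of `X`, `Y` and all elements collinear with a point of `X` and a point of `Y`. -/
def lineHull (C : P → P → P → Prop) (X Y : Set P) : Set P :=
  {r | r ∈ X ∨ r ∈ Y ∨ ∃ x ∈ X, ∃ y ∈ Y, C x y r}

theorem IsPPIP.lineHull_comm (h : IsPPIP P le ic C) (X Y : Set P) :
    lineHull C X Y = lineHull C Y X := by
  have hsub : ∀ X Y : Set P, lineHull C X Y ⊆ lineHull C Y X := by
    rintro X Y r (hr | hr | ⟨x, hx, y, hy, hC⟩)
    · exact .inr (.inl hr)
    · exact .inl hr
    · exact .inr (.inr ⟨y, hy, x, hx, h.c_symm_left _ _ _ hC⟩)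
  exact (hsub X Y).antisymm (hsub Y X)

theorem lineHull_subset {X Y Z : Set P} (hZ : IsCSub le ic C Z) (hX : X ⊆ Z) (hY : Y ⊆ Z) :
    lineHull C X Y ⊆ Z := by
  rintro r (hr | hr | ⟨x, hx, y, hy, hC⟩)
  · exact hX hr
  · exact hY hr
  · exact hZ.2.2 x y r (hX hx) (hY hy) hC

theorem IsPPIP.c_rotate (h : IsPPIP P le ic C) {p q r : P} (hC : C p q r) : C q r p :=
  h.c_symm_right _ _ _ (h.c_symm_left _ _ _ hC)

/-- The weak triangle property for five points inside a consistent subspace, without the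
nondegeneracy clauses. -/
theorem IsPPIP.triangle_s3 (h : IsPPIP P le ic C) {Z : Set P} (hZ : IsCSub le ic C Z)
    {a b c p q : P} (ha : a ∈ Z) (hb : b ∈ Z) (hc : c ∈ Z) (hp : p ∈ Z) (hq : q ∈ Z)
    (hacp : C a c p) (hbcq : C b c q) :
    (∃ x, C a b x ∧ C p q x) ∨ (∃ a', le a' a ∧ C b q a') ∨ C b q p ∨
      (∃ a' p', le a' a ∧ le p' p ∧ C q a' p') ∨ (le q a ∨ le q p) := by
  have hsub : ({a, b, c, p, q} : Set P) ⊆ Z := by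
    rintro u (rfl | rfl | rfl | rfl | rfl) <;> assumption
  rcases h.weak_triangle a b c p q hacp hbcq
    (fun u v hu hv => hZ.2.1 u v (hsub hu) (hsub hv)) with ⟨x, h1, h2, -⟩ | h'
  · exact .inl ⟨x, h1, h2⟩
  · exact .inr h'

theorem IsPPIP.mem_lineHull_of_left (h : IsPPIP P le ic C) {X Y Z : Set P}
    (hX : IsCSub le ic C X) (hY : IsCSub le ic C Y) (hZ : IsCSub le ic C Z)
    (hXZ : X ⊆ Z) (hYZ : Y ⊆ Z) {u v w : P} (hu : u ∈ X) (hv : v ∈ lineHull C X Y)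
    (hC : C u v w) : w ∈ lineHull C X Y := by
  have hvZ := lineHull_subset hZ hXZ hYZ hv
  rcases hv with hv | hv | ⟨x, hx, y, hy, hxy⟩
  · exact .inl (hX.2.2 u v w hu hv hC)
  · exact .inr (.inr ⟨u, hu, v, hv, hC⟩)
  rcases h.triangle_s3 hZ (hXZ hx) (hXZ hu) hvZ (hYZ hy) (hZ.2.2 _ _ _ (hXZ hu) hvZ hC)
    (h.c_symm_right _ _ _ hxy) hC with
    ⟨z, hz, hz'⟩ | ⟨a', ha', hC'⟩ | hC' | ⟨a', p', ha', hp', hC'⟩ | hw | hw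
  · exact .inr (.inr ⟨z, hX.2.2 _ _ _ hx hu hz, y, hy, h.c_rotate (h.c_rotate hz')⟩)
  · exact .inl (hX.2.2 _ _ _ hu (hX.1 _ _ ha' hx) (h.c_symm_right _ _ _ hC'))
  · exact .inr (.inr ⟨u, hu, y, hy, h.c_symm_right _ _ _ hC'⟩)
  · exact .inr (.inr ⟨a', hX.1 _ _ ha' hx, p', hY.1 _ _ hp' hy, h.c_rotate hC'⟩)
  · exact .inl (hX.1 _ _ hw hx)
  · exact .inr (.inl (hY.1 _ _ hw hy))

/-- Projectivity: the line hull of two subspaces of a consistent subspace is a subspace. -/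
theorem IsPPIP.isCSub_lineHull (h : IsPPIP P le ic C) {X Y Z : Set P}
    (hX : IsCSub le ic C X) (hY : IsCSub le ic C Y) (hZ : IsCSub le ic C Z)
    (hXZ : X ⊆ Z) (hYZ : Y ⊆ Z) : IsCSub le ic C (lineHull C X Y) := by
  have hsub := lineHull_subset hZ hXZ hYZ
  have hleft : ∀ {u v w : P}, u ∈ X → v ∈ lineHull C X Y → C u v w → w ∈ lineHull C X Y :=
    fun hu hv hC => h.mem_lineHull_of_left hX hY hZ hXZ hYZ hu hv hC
  have hright : ∀ {u v w : P}, u ∈ Y → v ∈ lineHull C X Y → C u v w → w ∈ lineHull C X Y := by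
    intro u v w hu hv hC
    rw [h.lineHull_comm] at hv ⊢
    exact h.mem_lineHull_of_left hY hX hZ hYZ hXZ hu hv hC
  refine ⟨?_, fun p q hp hq => hZ.2.1 p q (hsub hp) (hsub hq), ?_⟩
  · rintro r' r hr' (hr | hr | ⟨x, hx, y, hy, hC⟩)
    · exact .inl (hX.1 _ _ hr' hr)
    · exact .inr (.inl (hY.1 _ _ hr' hr))
    by_cases hrx : le r' x
    · exact .inl (hX.1 _ _ hrx hx)
    by_cases hry : le r' y
    · exact .inr (.inl (hY.1 _ _ hry hy))
    obtain ⟨x', y', hx', hy', hC'⟩ := h.regularity x y r r' hC hr' hrx hry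
    exact .inr (.inr ⟨x', hX.1 _ _ hx' hx, y', hY.1 _ _ hy' hy, hC'⟩)
  · intro u v w hu hv hC
    have huZ := hsub hu
    have hvZ := hsub hv
    rcases hu with hu | hu | ⟨x, hx, y, hy, hxy⟩
    · exact hleft hu hv hC
    · exact hright hu hv hC
    rcases h.triangle_s3 hZ (hXZ hx) hvZ huZ (hYZ hy) (hZ.2.2 _ _ _ huZ hvZ hC)
      (h.c_symm_right _ _ _ hxy) (h.c_symm_left _ _ _ hC) with
      ⟨z, hz, hz'⟩ | ⟨a', ha', hC'⟩ | hC' | ⟨a', p', ha', hp', hC'⟩ | hw | hw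
    · exact hright hy (hleft hx hv hz) (h.c_symm_right _ _ _ hz')
    · exact hleft (hX.1 _ _ ha' hx) hv (h.c_rotate (h.c_rotate hC'))
    · exact hright hy hv (h.c_rotate (h.c_rotate hC'))
    · exact .inr (.inr ⟨a', hX.1 _ _ ha' hx, p', hY.1 _ _ hp' hy, h.c_rotate hC'⟩)
    · exact .inl (hX.1 _ _ hw hx)
    · exact .inr (.inl (hY.1 _ _ hw hy))

end Projectivity

section Principal

variable {P : Type*} {le ic : P → P → Prop} {C : P → P → P → Prop}

/-- The principal ideal of `p` as an element of the semilattice of consistent subspaces. -/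
def IsPPIP.principal (h : IsPPIP P le ic C) (p : P) : {X : Set P // IsCSub le ic C X} :=
  ⟨{x | le x p}, h.isCSub_principal p⟩

theorem IsPPIP.principal_le_iff_mem (h : IsPPIP P le ic C) {p : P}
    {X : {X : Set P // IsCSub le ic C X}} : h.principal p ≤ X ↔ p ∈ X.1 :=
  ⟨fun hle => hle (h.le_refl p), fun hp x hx => X.2.1 x p hx hp⟩

theorem IsPPIP.principal_le_principal (h : IsPPIP P le ic C) {p q : P} :
    h.principal p ≤ h.principal q ↔ le p q :=
  h.principal_le_iff_mem

theorem IsPPIP.principal_injective (h : IsPPIP P le ic C) : Function.Injective h.principal :=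
  fun p q hpq => h.le_antisymm p q (h.principal_le_principal.1 hpq.le)
    (h.principal_le_principal.1 hpq.ge)

theorem IsPPIP.mem_of_isLUB_principal (h : IsPPIP P le ic C) {p q : P}
    {j : {X : Set P // IsCSub le ic C X}}
    (hj : IsLUB {h.principal p, h.principal q} j) : p ∈ j.1 ∧ q ∈ j.1 :=
  ⟨h.principal_le_iff_mem.1 (hj.1 (by simp)), h.principal_le_iff_mem.1 (hj.1 (by simp))⟩

theorem IsPPIP.isLUB_generated_pair (h : IsPPIP P le ic C) {p q : P} (hpq : ¬ ic p q) :
    IsLUB {h.principal p, h.principal q}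
      (⟨generated le C {p, q}, h.isCSub_generated (h.subset_consistentWith_pair hpq)⟩ :
        {X : Set P // IsCSub le ic C X}) := by
  refine ⟨?_, fun X hX => generated_subset_of_isCSub X.2 ?_⟩
  · rintro X (rfl | rfl) <;>
      exact h.principal_le_iff_mem.2 (subset_generated _ (by simp))
  · rintro a (rfl | rfl) <;> exact h.principal_le_iff_mem.1 (hX (by simp))

theorem IsPPIP.ic_iff_not_joinExists (h : IsPPIP P le ic C) (p q : P) :
    ic p q ↔ ¬ JoinExists (h.principal p) (h.principal q) := by
  refine ⟨?_, fun hj => by_contra fun hpq => hj ⟨_, h.isLUB_generated_pair hpq⟩⟩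
  rintro hpq ⟨j, hj⟩
  have hmem := h.mem_of_isLUB_principal hj
  exact j.2.2.1 p q hmem.1 hmem.2 hpq

theorem IsPPIP.joinIrred_principal (h : IsPPIP P le ic C) (p : P) :
    JoinIrred (h.principal p) := by
  refine ⟨fun hmin => h.principal_le_iff_mem.1 (hmin ⟨∅, isCSub_empty⟩), fun A B hAB => ?_⟩
  by_contra! hne
  have hproper : ∀ X : {X : Set P // IsCSub le ic C X}, X ≤ h.principal p →
      h.principal p ≠ X → X ≤ ⟨_, h.isCSub_strict_principal p⟩ := by
    rintro X hX hpX x hx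
    refine ⟨hX hx, ?_⟩
    rintro rfl
    exact hpX (_root_.le_antisymm (h.principal_le_iff_mem.2 hx) hX)
  have hub : h.principal p ≤ ⟨_, h.isCSub_strict_principal p⟩ := by
    apply hAB.2
    rintro X (rfl | rfl)
    · exact hproper _ (hAB.1 (by simp)) hne.1
    · exact hproper _ (hAB.1 (by simp)) hne.2
  exact (h.principal_le_iff_mem.1 hub).2 rfl

theorem IsPPIP.exists_principal_eq [Finite P] (h : IsPPIP P le ic C)
    {X : {X : Set P // IsCSub le ic C X}} (hX : JoinIrred X) : ∃ p, h.principal p = X := by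
  have hempty : (⟨∅, isCSub_empty⟩ : {X : Set P // IsCSub le ic C X}) < X :=
    lt_of_le_not_ge (Set.empty_subset X.1)
      fun hle => hX.1 fun Y => hle.trans (Set.empty_subset Y.1)
  obtain ⟨M, hM⟩ := (Set.toFinite (Set.Iio X)).exists_maximal ⟨_, hempty⟩
  obtain ⟨p, hpX, hpM⟩ := Set.not_subset.1 (not_le_of_gt hM.prop)
  have hlub : IsLUB {M, h.principal p} X := by
    refine ⟨?_, fun U hU => ?_⟩
    · rintro Y (rfl | rfl)
      · exact (le_of_lt hM.prop)
      · exact h.principal_le_iff_mem.2 hpX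
    · by_contra hXU
      have hlt : U ⊓ X < X := lt_of_le_of_ne inf_le_right fun heq => hXU (inf_eq_right.1 heq)
      have hle := hM.le_of_ge hlt (le_inf (hU (by simp)) (le_of_lt hM.prop))
      exact hpM (hle ⟨h.principal_le_iff_mem.1 (hU (by simp)), hpX⟩)
  rcases hX.2 _ _ hlub with heq | heq
  · exact absurd heq (ne_of_gt hM.prop)
  · exact ⟨p, heq.symm⟩

theorem IsPPIP.isLUB_principal_of_c (h : IsPPIP P le ic C) {p q r : P} (hC : C p q r)
    {j : {X : Set P // IsCSub le ic C X}}
    (hj : IsLUB {h.principal p, h.principal q} j) :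
    IsLUB {h.principal q, h.principal r} j := by
  have hmem := h.mem_of_isLUB_principal hj
  refine ⟨?_, fun U hU => hj.2 ?_⟩
  · rintro X (rfl | rfl)
    · exact h.principal_le_iff_mem.2 hmem.2
    · exact h.principal_le_iff_mem.2 (j.2.2.2 p q r hmem.1 hmem.2 hC)
  · have hq : q ∈ U.1 := h.principal_le_iff_mem.1 (hU (by simp))
    have hr : r ∈ U.1 := h.principal_le_iff_mem.1 (hU (by simp))
    rintro X (rfl | rfl)
    · exact h.principal_le_iff_mem.2 (U.2.2.2 q r p hq hr (h.c_rotate hC))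
    · exact h.principal_le_iff_mem.2 hq

theorem IsPPIP.exists_c_of_isLUB_principal (h : IsPPIP P le ic C) {p q r : P}
    {j : {X : Set P // IsCSub le ic C X}}
    (hj : IsLUB {h.principal p, h.principal q} j) (hr : r ∈ j.1)
    (hrp : ¬ le r p) (hrq : ¬ le r q) : ∃ x y, le x p ∧ le y q ∧ C x y r := by
  have hS := h.isCSub_lineHull (h.principal p).2 (h.principal q).2 j.2
    (hj.1 (by simp)) (hj.1 (by simp))
  have hle : j ≤ ⟨_, hS⟩ := by
    apply hj.2
    rintro X (rfl | rfl)
    · exact fun x hx => .inl hx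
    · exact fun x hx => .inr (.inl hx)
  rcases hle hr with hr | hr | ⟨x, hx, y, hy, hC⟩
  · exact absurd hr hrp
  · exact absurd hr hrq
  · exact ⟨x, y, hx, hy, hC⟩

/-- A point `x ≤ p` which together with `q` and `r` spans the same join as `p` is `p` itself. -/
theorem IsPPIP.eq_of_c_of_isLUB (h : IsPPIP P le ic C) {p q r x y : P}
    {j : {X : Set P // IsCSub le ic C X}}
    (hj : IsLUB {h.principal q, h.principal r} j) (hp : p ∈ j.1)
    (hpq : ¬ le p q) (hx : le x p) (hy : le y q) (hC : C x y r) : x = p := by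
  have hmem := h.mem_of_isLUB_principal hj
  have hxj : x ∈ j.1 := j.2.1 x p hx hp
  have hlub : IsLUB {h.principal x, h.principal q} j := by
    refine ⟨?_, fun U hU => hj.2 ?_⟩
    · rintro X (rfl | rfl)
      · exact h.principal_le_iff_mem.2 hxj
      · exact h.principal_le_iff_mem.2 hmem.1
    · have hxU : x ∈ U.1 := h.principal_le_iff_mem.1 (hU (by simp))
      have hqU : q ∈ U.1 := h.principal_le_iff_mem.1 (hU (by simp))
      rintro X (rfl | rfl)
      · exact h.principal_le_iff_mem.2 hqU
      · exact h.principal_le_iff_mem.2 (U.2.2.2 x y r hxU (U.2.1 y q hy hqU) hC)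
  by_contra hne
  have hpx : ¬ le p x := fun hpx => hne (h.le_antisymm _ _ hx hpx)
  obtain ⟨x', y', hx', -, hC'⟩ := h.exists_c_of_isLUB_principal hlub hp hpx hpq
  exact (h.ct1 _ _ _ hC').2.2.2 (h.le_trans _ _ _ hx' hx)

theorem IsPPIP.c_iff_collinear3 (h : IsPPIP P le ic C) (p q r : P) :
    C p q r ↔ Collinear3 (h.principal p) (h.principal q) (h.principal r) := by
  simp only [Collinear3, Incomp, h.principal_le_principal]
  constructor
  · intro hC
    have hinc := h.ct1 p q r hC
    have hpq := h.isLUB_generated_pair (h.cc1 p q r hC).1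
    have hqr := h.isLUB_principal_of_c hC hpq
    exact ⟨hinc.1, hinc.2.1, hinc.2.2, _, hpq, hqr,
      h.isLUB_principal_of_c (h.c_rotate hC) hqr⟩
  · rintro ⟨hpq, hqr, hrp, j, hjpq, hjqr, hjrp⟩
    have hmem := h.mem_of_isLUB_principal hjpq
    obtain ⟨x, y, hx, hy, hC⟩ := h.exists_c_of_isLUB_principal hjpq
      (h.mem_of_isLUB_principal hjqr).2 hrp.1 hqr.2
    obtain rfl := h.eq_of_c_of_isLUB hjqr hmem.1 hpq.1 hx hy hC
    rw [Set.pair_comm] at hjrp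
    obtain rfl := h.eq_of_c_of_isLUB hjrp hmem.2 hpq.2 hy hx (h.c_symm_left _ _ _ hC)
    exact hC

end Principal

/-- For a PPIP `P`, the map `p ↦ I_p` is a bijection from `P` onto the ∨-irreducible
elements of `Csub(P)`, preserving and reflecting the order, the inconsistency relation
and the collinearity relation. -/
theorem stmt3 (P : Type*) [Fintype P] (le ic : P → P → Prop) (C : P → P → P → Prop)
    (h : IsPPIP P le ic C) :
    ∃ hprin : ∀ p : P, IsCSub le ic C {x | le x p},
      Function.Injective
        (fun p : P => (⟨{x | le x p}, hprin p⟩ : {X : Set P // IsCSub le ic C X})) ∧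
      Set.range
        (fun p : P => (⟨{x | le x p}, hprin p⟩ : {X : Set P // IsCSub le ic C X})) =
        {X : {X : Set P // IsCSub le ic C X} | JoinIrred X} ∧
      (∀ p q : P, le p q ↔
        (⟨{x | le x p}, hprin p⟩ : {X : Set P // IsCSub le ic C X}) ≤
          ⟨{x | le x q}, hprin q⟩) ∧
      (∀ p q : P, ic p q ↔
        ¬ JoinExists (⟨{x | le x p}, hprin p⟩ : {X : Set P // IsCSub le ic C X})
          ⟨{x | le x q}, hprin q⟩) ∧
      (∀ p q r : P, C p q r ↔
        Collinear3 (⟨{x | le x p}, hprin p⟩ : {X : Set P // IsCSub le ic C X})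
          ⟨{x | le x q}, hprin q⟩ ⟨{x | le x r}, hprin r⟩) := by
  refine ⟨h.isCSub_principal, h.principal_injective, ?_,
    fun _ _ => h.principal_le_principal.symm, h.ic_iff_not_joinExists, h.c_iff_collinear3⟩
  ext X
  constructor
  · rintro ⟨p, rfl⟩
    exact h.joinIrred_principal p
  · exact fun hX => h.exists_principal_eq hX
end

section
/- Let P be a PPIP and X a consistent subset of P. Then there exists a consistent subspace S ∈ Csub(P) with X ⊆ S. -/
/-- An element consistent with every member of a maximal consistent set belongs to that set. -/
theorem IsPPIP.mem_of_maximal {P : Type*} {le ic : P → P → Prop} {C : P → P → P → Prop}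
    (h : IsPPIP P le ic C) {S : Set P}
    (hS : Maximal (fun T : Set P => ∀ p q, p ∈ T → q ∈ T → ¬ ic p q) S) {r : P}
    (hr : ∀ x ∈ S, ¬ ic x r) : r ∈ S := by
  refine hS.le_of_ge (y := insert r S) ?_ (Set.subset_insert r S) (Set.mem_insert r S)
  rintro p q (rfl | hp) (rfl | hq) hpq
  · exact h.ic1 _ _ hpq ⟨_, h.le_refl _, h.le_refl _⟩
  · exact hr q hq (h.ic_symm _ _ hpq)
  · exact hr p hp hpq
  · exact hS.prop p q hp hq hpq

/-- Maximal consistent sets are consistent subspaces. -/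
theorem IsPPIP.isCSub_of_maximal {P : Type*} {le ic : P → P → Prop} {C : P → P → P → Prop}
    (h : IsPPIP P le ic C) {S : Set P}
    (hS : Maximal (fun T : Set P => ∀ p q, p ∈ T → q ∈ T → ¬ ic p q) S) :
    IsCSub le ic C S := by
  refine ⟨fun p q hpq hq => h.mem_of_maximal hS fun x hx hxp => ?_, hS.prop,
    fun p q r hp hq hC => h.mem_of_maximal hS fun x hx hxr => ?_⟩
  · exact hS.prop x q hx hq (h.ic2 _ _ _ _ hxp (h.le_refl x) hpq)
  · have hxp := hS.prop x p hx hp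
    have hxq := hS.prop x q hx hq
    have := h.cc2 p q r x hC
    tauto

/-- In a PPIP, every consistent subset is contained in some consistent subspace. -/
theorem stmt4 (P : Type*) [Fintype P] (le ic : P → P → Prop) (C : P → P → P → Prop)
    (h : IsPPIP P le ic C) (X : Set P)
    (hX : ∀ p q, p ∈ X → q ∈ X → ¬ ic p q) :
    ∃ S : Set P, IsCSub le ic C S ∧ X ⊆ S := by
  obtain ⟨S, hXS, hS⟩ := (Set.toFinite
    {T : Set P | ∀ p q, p ∈ T → q ∈ T → ¬ ic p q}).exists_le_maximal hX
  exact ⟨S, h.isCSub_of_maximal hS, hXS⟩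
end

section
/- Let P be a PPIP. An element X of the meet-semilattice Csub(P) is ∨-irreducible if and only if X is a principal ideal, i.e., X = {x ∈ P : x ≤ p} for some p ∈ P. -/
namespace IsPPIP

variable {P : Type*} {le ic : P → P → Prop} {C : P → P → P → Prop}

/-- Every principal ideal of a PPIP is a consistent subspace. -/
theorem isCSub_principal_s6 (h : IsPPIP P le ic C) (p : P) : IsCSub le ic C {x | le x p} :=
  ⟨fun a b hab hb => h.le_trans a b p hab hb,
    fun a b ha hb hic => h.ic1 a b hic ⟨p, ha, hb⟩,
    fun a b r ha hb hC => h.ct2 a b r p hC ha hb⟩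

/-- A principal ideal of a PPIP with its top element removed is a consistent subspace. -/
theorem isCSub_principal_diff (h : IsPPIP P le ic C) (p : P) :
    IsCSub le ic C {x | le x p ∧ x ≠ p} := by
  refine ⟨?_, fun a b ha hb hic => h.ic1 a b hic ⟨p, ha.1, hb.1⟩, ?_⟩
  · rintro a b hab ⟨hb, hbp⟩
    refine ⟨h.le_trans a b p hab hb, ?_⟩
    rintro rfl
    exact hbp (h.le_antisymm b a hb hab)
  · rintro a b r ⟨ha, -⟩ ⟨hb, -⟩ hC
    refine ⟨h.ct2 a b r p hC ha hb, ?_⟩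
    rintro rfl
    exact (h.ct1 a b r hC).2.1.1 hb

end IsPPIP

theorem IsCSub.empty {P : Type*} (le ic : P → P → Prop) (C : P → P → P → Prop) :
    IsCSub le ic C ∅ := by
  simp [IsCSub]

/-- In the meet-semilattice `Csub(P)` of a PPIP `P`, an element is ∨-irreducible if and
only if it is a principal ideal of `P`. -/
theorem stmt6 (P : Type*) [Fintype P] (le ic : P → P → Prop) (C : P → P → P → Prop)
    (h : IsPPIP P le ic C) (X : {X : Set P // IsCSub le ic C X}) :
    JoinIrred X ↔ ∃ p : P, (X : Set P) = {x | le x p} := by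
  constructor
  · rintro ⟨hmin, hirr⟩
    -- Join a maximal proper subspace of `X` with the principal ideal of a point outside it.
    let properSubspaces : Set {X : Set P // IsCSub le ic C X} := {Y | Y < X}
    have hne : properSubspaces.Nonempty := by
      push Not at hmin
      obtain ⟨Z, hZ⟩ := hmin
      refine ⟨⟨∅, IsCSub.empty le ic C⟩, lt_of_le_not_ge (Set.empty_subset _) fun hX => hZ ?_⟩
      exact Set.Subset.trans hX (Set.empty_subset _)
    obtain ⟨Y, hY⟩ := properSubspaces.toFinite.exists_maximal hne
    have hYX : Y < X := hY.prop
    obtain ⟨p, hpX, hpY⟩ := Set.exists_of_ssubset (show (Y : Set P) ⊂ X from hYX)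
    have hlub : IsLUB {Y, ⟨{x | le x p}, h.isCSub_principal_s6 p⟩} X := by
      constructor
      · rintro Z (rfl | rfl)
        · exact hYX.le
        · exact fun x hx => X.2.1 x p hx hpX
      · intro W hW
        have hYW : Y ≤ W := hW (by simp)
        have hpW : p ∈ (W : Set P) :=
          (hW (Set.mem_insert_of_mem _ rfl) : {x | le x p} ⊆ (W : Set P)) (h.le_refl p)
        let Z : {X : Set P // IsCSub le ic C X} := ⟨W ∩ X, W.2.inter X.2⟩
        have hYZ : Y ≤ Z := fun x hx => ⟨hYW hx, hYX.le hx⟩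
        have hZX : Z ≤ X := fun x hx => hx.2
        by_contra hXW
        have hZ : Z < X := lt_of_le_not_ge hZX fun hXZ => hXW fun x hx => (hXZ hx).1
        exact hpY (hY.le_of_ge hZ hYZ ⟨hpW, hpX⟩)
    rcases hirr _ _ hlub with hXY | hXp
    · exact absurd hXY.symm hYX.ne
    · exact ⟨p, congrArg Subtype.val hXp⟩
  · rintro ⟨p, hXp⟩
    have hp : p ∈ (X : Set P) := hXp ▸ h.le_refl p
    refine ⟨fun hmin => hmin ⟨∅, IsCSub.empty le ic C⟩ hp, fun A B hlub => ?_⟩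
    have hle : ∀ Z : {X : Set P // IsCSub le ic C X}, Z ≤ X → X ≠ Z →
        Z ≤ ⟨{x | le x p ∧ x ≠ p}, h.isCSub_principal_diff p⟩ := by
      intro Z hZX hne x hx
      refine ⟨(Set.ext_iff.mp hXp x).mp (hZX hx), ?_⟩
      rintro rfl
      refine hne (le_antisymm (fun y hy => ?_) hZX)
      exact Z.2.1 y x (hXp ▸ hy : y ∈ {y | le y x}) hx
    by_contra! hAB
    have hX : X ≤ ⟨{x | le x p ∧ x ≠ p}, h.isCSub_principal_diff p⟩ := hlub.2 (by
      rintro Z (rfl | rfl)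
      · exact hle _ (hlub.1 (by simp)) hAB.1
      · exact hle _ (hlub.1 (by simp)) hAB.2)
    exact (hX hp).2 rfl
end

section
/- Let L be a finite semilattice and B ⊆ L a (∧,∨)-closed subset. Then the number of ∨-irreducible elements of the semilattice B is at most the number of ∨-irreducible elements of L. -/
/-- `j` is the least upper bound of `a` and `b` within the subset `B`. -/
def IsLUBwithin {α : Type*} [Preorder α] (B : Set α) (a b j : α) : Prop :=
  j ∈ B ∧ a ≤ j ∧ b ≤ j ∧ ∀ u ∈ B, a ≤ u → b ≤ u → j ≤ u

/-- The join of `a` and `b` exists in the semilattice `B`. -/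
def JoinExistsIn {α : Type*} [Preorder α] (B : Set α) (a b : α) : Prop :=
  ∃ j, IsLUBwithin B a b j

/-- `l` is a ∨-irreducible element of the semilattice `B`: `l ∈ B`, `l` is not the
minimum element of `B`, and whenever `l` is the join (within `B`) of `a, b ∈ B`,
`l = a` or `l = b`. -/
def JoinIrredIn {α : Type*} [Preorder α] (B : Set α) (l : α) : Prop :=
  l ∈ B ∧ (¬ ∀ x ∈ B, l ≤ x) ∧
  ∀ a b, a ∈ B → b ∈ B → IsLUBwithin B a b l → l = a ∨ l = b

/-- `B` is (∧,∨)-closed: closed under meets and under those joins that exist. -/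
def WedgeVeeClosed {α : Type*} [SemilatticeInf α] (B : Set α) : Prop :=
  (∀ a ∈ B, ∀ b ∈ B, a ⊓ b ∈ B) ∧
  (∀ a ∈ B, ∀ b ∈ B, ∀ j, IsLUB ({a, b} : Set α) j → j ∈ B)

/-- A collinear triple in the semilattice `B`: pairwise incomparable, all pairwise
joins exist in `B` and coincide. -/
def CollinearIn {α : Type*} [Preorder α] (B : Set α) (x y z : α) : Prop :=
  Incomp x y ∧ Incomp y z ∧ Incomp z x ∧
  ∃ j, IsLUBwithin B x y j ∧ IsLUBwithin B y z j ∧ IsLUBwithin B z x j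

/-- In a finite meet-semilattice, two elements with a common upper bound have a join. -/
theorem exists_isLUB_pair_of_le {L : Type*} [SemilatticeInf L] [Finite L] {a b u : L}
    (ha : a ≤ u) (hb : b ≤ u) : ∃ j, IsLUB ({a, b} : Set L) j := by
  classical
  have := Fintype.ofFinite L
  let s : Finset L := Finset.univ.filter fun x => a ≤ x ∧ b ≤ x
  have hs : s.Nonempty := ⟨u, by simp [s, ha, hb]⟩
  refine ⟨s.inf' hs id, ?_, fun x hx => Finset.inf'_le id ?_⟩
  · rintro x (rfl | rfl) <;> exact Finset.le_inf' _ _ fun y hy => by simp_all [s]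
  · simpa [s, upperBounds_insert] using hx

/-- In a finite order, `b ≰ c` is witnessed by a ∨-irreducible element. -/
theorem exists_joinIrred_le_not_le {L : Type*} [PartialOrder L] [Finite L] {b c : L}
    (h : ¬ b ≤ c) : ∃ l, JoinIrred l ∧ l ≤ b ∧ ¬ l ≤ c := by
  obtain ⟨l, hl⟩ := (Set.toFinite {l : L | l ≤ b ∧ ¬ l ≤ c}).exists_minimal ⟨b, le_rfl, h⟩
  refine ⟨l, ⟨fun hmin => hl.prop.2 (hmin c), fun a a' hj => ?_⟩, hl.prop⟩
  by_contra! hne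
  have key : ∀ x ≤ l, l ≠ x → x ≤ c := fun x hx hxne => by
    by_contra hxc
    exact hxne (le_antisymm (hl.le_of_le ⟨hx.trans hl.prop.1, hxc⟩ hx) hx)
  refine hl.prop.2 (hj.2 ?_)
  rintro x (rfl | rfl)
  · exact key _ (hj.1 (by simp)) hne.1
  · exact key _ (hj.1 (by simp)) hne.2

/-- A ∨-irreducible element `b` of a (∧,∨)-closed subset `B` has a unique lower cover in `B`. -/
theorem JoinIrredIn.exists_lowerCover {L : Type*} [SemilatticeInf L] [Finite L] {B : Set L}
    (hB : WedgeVeeClosed B) {b : L} (hb : JoinIrredIn B b) :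
    ∃ c, c < b ∧ ∀ x ∈ B, x < b → x ≤ c := by
  obtain ⟨hbB, hmin, hirr⟩ := hb
  push Not at hmin
  obtain ⟨y, hyB, hy⟩ := hmin
  obtain ⟨c, hc⟩ := (Set.toFinite {x : L | x ∈ B ∧ x < b}).exists_maximal
    ⟨b ⊓ y, hB.1 _ hbB _ hyB, inf_lt_left.2 hy⟩
  refine ⟨c, hc.prop.2, fun x hxB hxb => ?_⟩
  obtain ⟨j, hj⟩ := exists_isLUB_pair_of_le hxb.le hc.prop.2.le
  have hjB := hB.2 _ hxB _ hc.prop.1 _ hj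
  have hxj : x ≤ j := hj.1 (by simp)
  have hcj : c ≤ j := hj.1 (by simp)
  have hlub : ∀ u, x ≤ u → c ≤ u → j ≤ u := fun u hxu hcu => hj.2 <| by
    rintro z (rfl | rfl) <;> assumption
  have hjb : j ≠ b := by
    rintro rfl
    rcases hirr x c hxB hc.prop.1 ⟨hjB, hxj, hcj, fun u _ => hlub u⟩ with h | h
    · exact hxb.ne' h
    · exact hc.prop.2.ne' h
  exact hxj.trans (hc.le_of_ge ⟨hjB, (hlub b hxb.le hc.prop.2.le).lt_of_ne hjb⟩ hcj)

/-- For a (∧,∨)-closed subset `B` of a finite semilattice `L`, the number of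
∨-irreducible elements of `B` is at most the number of ∨-irreducible elements of `L`. -/
theorem stmt8 (L : Type*) [SemilatticeInf L] [Fintype L]
    (B : Set L) (hB : WedgeVeeClosed B) :
    {l : L | JoinIrredIn B l}.ncard ≤ {l : L | JoinIrred l}.ncard := by
  have hex : ∀ b, JoinIrredIn B b →
      ∃ l, JoinIrred l ∧ l ≤ b ∧ ∀ x ∈ B, x < b → ¬ l ≤ x := fun b hb => by
    obtain ⟨c, hcb, hc⟩ := hb.exists_lowerCover hB
    obtain ⟨l, hl, hlb, hlc⟩ := exists_joinIrred_le_not_le hcb.not_ge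
    exact ⟨l, hl, hlb, fun x hxB hxb hlx => hlc (hlx.trans (hc x hxB hxb))⟩
  choose! f hf hfle hfmin using hex
  have hle : ∀ b b', JoinIrredIn B b → JoinIrredIn B b' → f b = f b' → b ≤ b' := by
    intro b b' hb hb' h
    by_contra hbb'
    exact hfmin b hb (b ⊓ b') (hB.1 _ hb.1 _ hb'.1) (inf_lt_left.2 hbb')
      (le_inf (hfle b hb) (h ▸ hfle b' hb'))
  exact Set.ncard_le_ncard_of_injOn f hf
    (fun b hb b' hb' h => le_antisymm (hle b b' hb hb' h) (hle b' b hb' hb h.symm))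
    (Set.toFinite _)
end

section
/- Let L be a finite meet-semilattice. Define a ⊔ b := a ∨ b if the join a ∨ b exists in L, and a ⊔ b := a ∧ b otherwise, and define t(x,y,z,w) := ((y ∧ z) ⊔ (z ∧ w)) ⊔ (w ∧ y). Then t is a 3-edge term: for all x, y ∈ L, t(y,y,x,x) = x, t(y,x,y,x) = x, and t(x,x,x,y) = x. -/
open Classical in
/-- `a ⊔ b`: the join of `a` and `b` if it exists, and `a ⊓ b` otherwise. -/
noncomputable def hsup {α : Type*} [SemilatticeInf α] (a b : α) : α :=
  if h : ∃ j, IsLUB ({a, b} : Set α) j then h.choose else a ⊓ b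

/-- `t(x,y,z,w) = ((y ∧ z) ⊔ (z ∧ w)) ⊔ (w ∧ y)`. -/
noncomputable def tEdge {α : Type*} [SemilatticeInf α] (x y z w : α) : α :=
  hsup (hsup (y ⊓ z) (z ⊓ w)) (w ⊓ y)

theorem hsup_eq_of_isLUB {α : Type*} [SemilatticeInf α] {a b j : α}
    (h : IsLUB ({a, b} : Set α) j) : hsup a b = j := by
  have hex : ∃ j, IsLUB ({a, b} : Set α) j := ⟨j, h⟩
  rw [hsup, dif_pos hex]
  exact hex.choose_spec.unique h

theorem hsup_eq_right {α : Type*} [SemilatticeInf α] {a b : α} (h : a ≤ b) : hsup a b = b :=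
  hsup_eq_of_isLUB (IsGreatest.isLUB ⟨by simp, by simp [upperBounds, h]⟩)

theorem hsup_eq_left {α : Type*} [SemilatticeInf α] {a b : α} (h : b ≤ a) : hsup a b = a :=
  hsup_eq_of_isLUB (IsGreatest.isLUB ⟨by simp, by simp [upperBounds, h]⟩)

/-- `t` is a 3-edge term on any finite meet-semilattice. -/
theorem stmt10 (L : Type*) [SemilatticeInf L] [Fintype L] :
    ∀ x y : L, tEdge y y x x = x ∧ tEdge y x y x = x ∧ tEdge x x x y = x := by
  intro x y
  refine ⟨?_, ?_, ?_⟩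
  · rw [tEdge, inf_idem, hsup_eq_right inf_le_right, hsup_eq_left inf_le_left]
  · rw [tEdge, inf_idem, inf_comm y x, hsup_eq_left le_rfl, hsup_eq_right inf_le_left]
  · rw [tEdge, inf_idem, hsup_eq_left inf_le_left, hsup_eq_left inf_le_right]
end

section
/- (Locally Comparing Property) Let L be a finite modular semilattice, B a (∧,∨)-closed subset of L^n, i ∈ [n] and l ∈ L, and assume the base e^i_l exists. Then for every b ∈ B: e^i_l ≤ b if and only if l ≤ b[i]. -/
/-- Locally Comparing Property: if the base `e = e^i_l` exists, then for every `b ∈ B`,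
`e ≤ b` iff `l ≤ b i`. -/
theorem stmt11 (L : Type*) [SemilatticeInf L] [Fintype L] (hL : ModularSemilattice L)
    (n : ℕ) (B : Set (Fin n → L)) (hB : WedgeVeeClosed B)
    (i : Fin n) (l : L) (e : Fin n → L)
    (he : IsLeast {b : Fin n → L | b ∈ B ∧ b i = l} e) :
    ∀ b ∈ B, (e ≤ b ↔ l ≤ b i) := by
  obtain ⟨⟨heB, rfl⟩, hmin⟩ := he
  exact fun b hb => ⟨fun h => h i, fun h =>
    (hmin ⟨hB.1 e heB b hb, inf_eq_left.mpr h⟩).trans inf_le_right⟩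
end

section
/- Let L be a finite modular semilattice and B a (∧,∨)-closed subset of L^n. An element b ∈ B is a ∨-irreducible element of the semilattice B if and only if there exist i ∈ [n] and a ∨-irreducible element l of the semilattice π_i(B) such that b = e^i_l. -/
/-- In a power of a modular semilattice, two elements with a common upper bound have a
join, which is computed componentwise. -/
theorem ModularSemilattice.exists_isLUB_pi {ι L : Type*} [SemilatticeInf L]
    (hL : ModularSemilattice L) {a c u : ι → L} (ha : a ≤ u) (hc : c ≤ u) :
    ∃ j, IsLUB ({a, c} : Set (ι → L)) j ∧ ∀ i, IsLUB ({a i, c i} : Set L) (j i) := by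
  choose j hj using fun i => hL.1 (a i) (c i) ⟨u i, ha i, hc i⟩
  refine ⟨j, isLUB_pi.2 fun i => ?_, hj⟩
  simpa only [Set.image_pair] using hj i

/-- In a (∧,∨)-closed set, the elements strictly below a ∨-irreducible element have a
greatest element. -/
theorem JoinIrredIn.exists_isGreatest_lt {ι L : Type*} [Finite ι] [SemilatticeInf L] [Finite L]
    (hL : ModularSemilattice L) {B : Set (ι → L)} (hB : WedgeVeeClosed B) {b : ι → L}
    (hb : JoinIrredIn B b) : ∃ m, IsGreatest {x | x ∈ B ∧ x < b} m := by
  obtain ⟨hbB, hmin, hirr⟩ := hb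
  push Not at hmin
  obtain ⟨x, hx, hbx⟩ := hmin
  have hne : {x | x ∈ B ∧ x < b}.Nonempty :=
    ⟨b ⊓ x, hB.1 b hbB x hx, inf_le_left.lt_of_ne fun h => hbx (inf_eq_left.1 h)⟩
  obtain ⟨m, hm⟩ := (Set.toFinite {x | x ∈ B ∧ x < b}).exists_maximal hne
  refine ⟨m, hm.prop, fun y hy => ?_⟩
  obtain ⟨j, hj, -⟩ := hL.exists_isLUB_pi hm.prop.2.le hy.2.le
  have hmj : m ≤ j := hj.1 (by simp)
  have hyj : y ≤ j := hj.1 (by simp)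
  have hjb : j ≤ b := hj.2 (by simp [hm.prop.2.le, hy.2.le])
  have hjB : j ∈ B := hB.2 m hm.prop.1 y hy.1 j hj
  have hlt : j < b := by
    refine hjb.lt_of_ne ?_
    rintro rfl
    rcases hirr m y hm.prop.1 hy.1
      ⟨hjB, hmj, hyj, fun u _ hmu hyu => hj.2 (by simp [hmu, hyu])⟩ with h | h
    · exact hm.prop.2.ne h.symm
    · exact hy.2.ne h.symm
  exact hyj.trans (hm.le_of_ge ⟨hjB, hlt⟩ hmj)

/-- An element `b ∈ B` is ∨-irreducible in `B` iff `b = e^i_l` for some coordinate `i`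
and some ∨-irreducible element `l` of `π_i(B)`. -/
theorem stmt12 (L : Type*) [SemilatticeInf L] [Fintype L] (hL : ModularSemilattice L)
    (n : ℕ) (B : Set (Fin n → L)) (hB : WedgeVeeClosed B) (b : Fin n → L) :
    JoinIrredIn B b ↔
      ∃ (i : Fin n) (l : L),
        JoinIrredIn {t : L | ∃ c ∈ B, c i = t} l ∧
        IsLeast {x : Fin n → L | x ∈ B ∧ x i = l} b := by
  constructor
  · intro hb
    obtain ⟨m, ⟨hmB, hmb⟩, hgreatest⟩ := hb.exists_isGreatest_lt hL hB
    obtain ⟨i, hi⟩ : ∃ i, ¬ b i ≤ m i := by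
      by_contra! h
      exact hmb.not_ge h
    have le_of_inf_not_le : ∀ x ∈ B, ¬ b ⊓ x ≤ m → b ≤ x := fun x hx h => by
      by_contra hbx
      exact h (hgreatest ⟨hB.1 b hb.1 x hx,
        inf_le_left.lt_of_ne fun h => hbx (inf_eq_left.1 h)⟩)
    have eq_or_le : ∀ x ∈ B, x i ≤ b i → x i = b i ∨ x i ≤ m i := fun x hx hxb => by
      by_cases h : b ⊓ x ≤ m
      · exact Or.inr ((le_inf hxb le_rfl).trans (h i))
      · exact Or.inl (hxb.antisymm (le_of_inf_not_le x hx h i))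
    refine ⟨i, b i, ⟨⟨b, hb.1, rfl⟩, fun h => hi (h _ ⟨m, hmB, rfl⟩), ?_⟩,
      ⟨hb.1, rfl⟩, ?_⟩
    · rintro _ _ ⟨a, ha, rfl⟩ ⟨c, hc, rfl⟩ ⟨-, hab, hcb, hlub⟩
      rcases eq_or_le a ha hab with h | ham
      · exact Or.inl h.symm
      rcases eq_or_le c hc hcb with h | hcm
      · exact Or.inr h.symm
      exact absurd (hlub _ ⟨m, hmB, rfl⟩ ham hcm) hi
    · rintro x ⟨hx, hxi⟩
      exact le_of_inf_not_le x hx fun h => hi ((le_inf le_rfl hxi.ge).trans (h i))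
  · rintro ⟨i, _, ⟨-, hmin, hirr⟩, ⟨hbB, rfl⟩, hleast⟩
    refine ⟨hbB, fun h => hmin ?_, ?_⟩
    · rintro _ ⟨c, hc, rfl⟩
      exact h c hc i
    · rintro a c ha hc ⟨-, hab, hcb, hlub⟩
      obtain ⟨j, hj, hji⟩ := hL.exists_isLUB_pi hab hcb
      have hbj : b ≤ j := hlub j (hB.2 a ha c hc j hj) (hj.1 (by simp)) (hj.1 (by simp))
      refine (hirr (a i) (c i) ⟨a, ha, rfl⟩ ⟨c, hc, rfl⟩ ⟨⟨b, hbB, rfl⟩, hab i, hcb i,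
        fun u _ hau hcu => (hbj i).trans ((hji i).2 (by simp [hau, hcu]))⟩).imp
        (fun h => ?_) fun h => ?_
      · exact (hleast ⟨ha, h.symm⟩).antisymm hab
      · exact (hleast ⟨hc, h.symm⟩).antisymm hcb
end

section
/- Let L be a finite modular semilattice and B a (∧,∨)-closed subset of L^n. For ∨-irreducible elements a, b of the semilattice B, the join a ∨ b does not exist in B if and only if there exist i ∈ [n] and ∨-irreducible elements l, l' of the semilattice π_i(B) such that the join l ∨ l' does not exist in π_i(B), e^i_l ≤ a, and e^i_{l'} ≤ b. -/
theorem isLUB_pair_pi {ι L : Type*} [Preorder L] {x y j : ι → L}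
    (h : ∀ i, IsLUB {x i, y i} (j i)) : IsLUB {x, y} j :=
  isLUB_pi.2 fun i => by simpa [Set.image_pair] using h i

/-- If any two bounded elements of `L` have a join, then every coordinate projection of a
(∧,∨)-closed set is closed under the joins of pairs bounded in the projection. -/
theorem WedgeVeeClosed.isLUB_mem_proj {ι L : Type*} [SemilatticeInf L]
    (hL : ∀ a b : L, (∃ u, a ≤ u ∧ b ≤ u) → JoinExists a b)
    {B : Set (ι → L)} (hB : WedgeVeeClosed B) (i : ι) {x p q j : L}
    (hx : ∃ c ∈ B, c i = x) (hp : ∃ c ∈ B, c i = p) (hq : ∃ c ∈ B, c i = q)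
    (hpx : p ≤ x) (hqx : q ≤ x) (hj : IsLUB {p, q} j) : ∃ c ∈ B, c i = j := by
  obtain ⟨c, hc, rfl⟩ := hx
  obtain ⟨d, hd, rfl⟩ := hp
  obtain ⟨e, he, rfl⟩ := hq
  choose k hk using fun m => hL ((d ⊓ c) m) ((e ⊓ c) m) ⟨c m, inf_le_right, inf_le_right⟩
  refine ⟨k, hB.2 _ (hB.1 _ hd _ hc) _ (hB.1 _ he _ hc) k (isLUB_pair_pi hk), ?_⟩
  have hki := hk i
  simp only [Pi.inf_apply, inf_eq_left.2 hpx, inf_eq_left.2 hqx] at hki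
  exact hki.unique hj

/-- In a modular semilattice, if `x` and `y` have no common upper bound, then neither do `y`
and some ∨-irreducible of `P` below `x`. -/
theorem ModularSemilattice.exists_joinIrredIn_le {L : Type*} [SemilatticeInf L] [Finite L]
    (hL : ModularSemilattice L) {P : Set L}
    (hP : ∀ x ∈ P, ∀ p ∈ P, ∀ q ∈ P, p ≤ x → q ≤ x → ∀ j, IsLUB {p, q} j → j ∈ P)
    {y : L} (hy : y ∈ P) {x : L} (hx : x ∈ P) (hxy : ¬ ∃ u, x ≤ u ∧ y ≤ u) :
    ∃ l, JoinIrredIn P l ∧ l ≤ x ∧ ¬ ∃ u, l ≤ u ∧ y ≤ u := by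
  induction x using WellFoundedLT.induction with
  | ind x ih =>
  by_cases hirr : JoinIrredIn P x
  · exact ⟨x, hirr, le_rfl, hxy⟩
  have hmin : ¬ ∀ z ∈ P, x ≤ z := fun h => hxy ⟨y, h y hy, le_rfl⟩
  obtain ⟨p, q, hp, hq, hlub, hxp, hxq⟩ :
      ∃ p q, p ∈ P ∧ q ∈ P ∧ IsLUBwithin P p q x ∧ x ≠ p ∧ x ≠ q := by
    by_contra! h
    exact hirr ⟨hx, hmin, fun p q hp hq hl => or_iff_not_imp_left.2 (h p q hp hq hl)⟩
  obtain ⟨-, hpx, hqx, hleast⟩ := hlub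
  by_cases hpy : ∃ u, p ≤ u ∧ y ≤ u
  · by_cases hqy : ∃ u, q ≤ u ∧ y ≤ u
    · obtain ⟨m, hm⟩ := hL.1 p q ⟨x, hpx, hqx⟩
      obtain ⟨u, hu⟩ := hL.2.2 p q y ⟨m, hm⟩ (hL.1 _ _ hqy)
        (hL.1 _ _ (hpy.imp fun _ => And.symm))
      have hpu : p ≤ u := hu.1 (by simp)
      have hqu : q ≤ u := hu.1 (by simp)
      have hxm : x ≤ m := hleast m (hP x hx p hp q hq hpx hqx m hm)
        (hm.1 (by simp)) (hm.1 (by simp))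
      exact absurd ⟨u, hxm.trans (hm.2 (by simp [hpu, hqu])), hu.1 (by simp)⟩ hxy
    · obtain ⟨l, hl, hlq, hly⟩ := ih q (lt_of_le_of_ne hqx hxq.symm) hq hqy
      exact ⟨l, hl, hlq.trans hqx, hly⟩
  · obtain ⟨l, hl, hlp, hly⟩ := ih p (lt_of_le_of_ne hpx hxp.symm) hp hpy
    exact ⟨l, hl, hlp.trans hpx, hly⟩

/-- If `l ≤ a i` is in the `i`-th projection of `B` and `a ∈ B`, then the base `e^i_l` exists
and lies below `a`. -/
theorem WedgeVeeClosed.exists_base_le {ι L : Type*} [SemilatticeInf L] [Finite ι] [Finite L]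
    {B : Set (ι → L)} (hB : WedgeVeeClosed B) {i : ι} {a : ι → L} (ha : a ∈ B) {l : L}
    (hl : ∃ c ∈ B, c i = l) (hla : l ≤ a i) :
    ∃ e : ι → L, IsLeast {x : ι → L | x ∈ B ∧ x i = l} e ∧ e ≤ a := by
  obtain ⟨c, hc, rfl⟩ := hl
  obtain ⟨e, he⟩ := (Set.toFinite {x : ι → L | x ∈ B ∧ x i = c i}).exists_minimal
    ⟨c, hc, rfl⟩
  have hle : ∀ x ∈ B, x i = c i → e ≤ x := fun x hx hxi =>
    (he.2 (y := e ⊓ x) ⟨hB.1 _ he.1.1 _ hx, by simp [he.1.2, hxi]⟩ inf_le_left).trans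
      inf_le_right
  exact ⟨e, ⟨he.1, fun x hx => hle x hx.1 hx.2⟩,
    (hle (c ⊓ a) (hB.1 _ hc _ ha) (inf_eq_left.2 hla)).trans inf_le_right⟩

/-- For ∨-irreducible `a, b` of `B`, the join `a ∨ b` does not exist in `B` iff there
are a coordinate `i` and ∨-irreducible `l, l'` of `π_i(B)` whose join does not exist
in `π_i(B)` with `e^i_l ≤ a` and `e^i_{l'} ≤ b`. -/
theorem stmt13 (L : Type*) [SemilatticeInf L] [Fintype L] (hL : ModularSemilattice L)
    (n : ℕ) (B : Set (Fin n → L)) (hB : WedgeVeeClosed B)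
    (a b : Fin n → L) (ha : JoinIrredIn B a) (hb : JoinIrredIn B b) :
    ¬ JoinExistsIn B a b ↔
      ∃ (i : Fin n) (l l' : L),
        JoinIrredIn {t : L | ∃ c ∈ B, c i = t} l ∧
        JoinIrredIn {t : L | ∃ c ∈ B, c i = t} l' ∧
        ¬ JoinExistsIn {t : L | ∃ c ∈ B, c i = t} l l' ∧
        (∃ e : Fin n → L, IsLeast {x : Fin n → L | x ∈ B ∧ x i = l} e ∧ e ≤ a) ∧
        (∃ e : Fin n → L, IsLeast {x : Fin n → L | x ∈ B ∧ x i = l'} e ∧ e ≤ b) := by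
  have hP : ∀ i : Fin n, ∀ x ∈ {t : L | ∃ c ∈ B, c i = t}, ∀ p ∈ {t : L | ∃ c ∈ B, c i = t},
      ∀ q ∈ {t : L | ∃ c ∈ B, c i = t}, p ≤ x → q ≤ x → ∀ j, IsLUB {p, q} j →
      j ∈ {t : L | ∃ c ∈ B, c i = t} :=
    fun i _ hx _ hp _ hq hpx hqx _ hj => hB.isLUB_mem_proj hL.1 i hx hp hq hpx hqx hj
  constructor
  · intro hab
    obtain ⟨i, hi⟩ : ∃ i, ¬ ∃ u, a i ≤ u ∧ b i ≤ u := by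
      by_contra! h
      choose j hj using fun i => hL.1 _ _ (h i)
      have hlub : IsLUB {a, b} j := isLUB_pair_pi hj
      exact hab ⟨j, hB.2 a ha.1 b hb.1 j hlub, hlub.1 (by simp), hlub.1 (by simp),
        fun u _ hau hbu => hlub.2 (by simp [hau, hbu])⟩
    obtain ⟨l, hl, hla, hlb⟩ := hL.exists_joinIrredIn_le (hP i) ⟨b, hb.1, rfl⟩ ⟨a, ha.1, rfl⟩ hi
    obtain ⟨l', hl', hlb', hll⟩ := hL.exists_joinIrredIn_le (hP i) hl.1 ⟨b, hb.1, rfl⟩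
      fun h => hlb (h.imp fun _ => And.symm)
    exact ⟨i, l, l', hl, hl', fun ⟨j, _, hlj, hlj', _⟩ => hll ⟨j, hlj', hlj⟩,
      hB.exists_base_le ha.1 hl.1 hla, hB.exists_base_le hb.1 hl'.1 hlb'⟩
  · rintro ⟨i, l, l', hl, hl', hll, ⟨e, he, hea⟩, ⟨e', he', heb⟩⟩ ⟨j, hj, haj, hbj, -⟩
    have hlj : l ≤ j i := he.1.2 ▸ (hea.trans haj) i
    have hlj' : l' ≤ j i := he'.1.2 ▸ (heb.trans hbj) i
    obtain ⟨m, hm⟩ := hL.1 l l' ⟨j i, hlj, hlj'⟩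
    exact hll ⟨m, hP i _ ⟨j, hj, rfl⟩ l hl.1 l' hl'.1 hlj hlj' m hm, hm.1 (by simp),
      hm.1 (by simp), fun u _ hu hu' => hm.2 (by simp [hu, hu'])⟩
end

section
/- Let L be a finite modular semilattice and B a (∧,∨)-closed subset of L^n. Suppose the bases e^i_a, e^j_b, e^k_c exist, each is a ∨-irreducible element of B, and they are pairwise consistent (each of the joins e^i_a ∨ e^j_b, e^j_b ∨ e^k_c, e^k_c ∨ e^i_a exists in B). Then the following are equivalent: (i) the triple (e^i_a, e^j_b, e^k_c) is collinear in B; (ii) the triple (a, e^j_b[i], e^k_c[i]) is collinear in π_i(B), the triple (e^i_a[j], b, e^k_c[j]) is collinear in π_j(B), and the triple (e^i_a[k], e^j_b[k], c) is collinear in π_k(B). -/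
theorem CollinearIn.rotate {α : Type*} [Preorder α] {B : Set α} {x y z : α}
    (h : CollinearIn B x y z) : CollinearIn B y z x :=
  let ⟨hxy, hyz, hzx, m, mxy, myz, mzx⟩ := h
  ⟨hyz, hzx, hxy, m, myz, mzx, mxy⟩

/-- In a closed subset of a power, bounded pairs have a join, computed componentwise. -/
theorem WedgeVeeClosed.exists_join_of_le {L ι : Type*} [SemilatticeInf L]
    (hL : ModularSemilattice L) {B : Set (ι → L)} (hB : WedgeVeeClosed B) {x y u : ι → L}
    (hx : x ∈ B) (hy : y ∈ B) (hxu : x ≤ u) (hyu : y ≤ u) :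
    ∃ m ∈ B, ∀ t, IsLUB {x t, y t} (m t) := by
  choose m hm using fun t => hL.1 (x t) (y t) ⟨u t, hxu t, hyu t⟩
  refine ⟨m, hB.2 x hx y hy m (isLUB_pi.2 fun t => ?_), hm⟩
  simpa [Set.image_pair] using hm t

/-- Joins within a closed subset of a power are computed componentwise. -/
theorem IsLUBwithin.isLUB_apply {L ι : Type*} [SemilatticeInf L]
    (hL : ModularSemilattice L) {B : Set (ι → L)} (hB : WedgeVeeClosed B) {x y m : ι → L}
    (hx : x ∈ B) (hy : y ∈ B) (h : IsLUBwithin B x y m) (t : ι) :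
    IsLUB {x t, y t} (m t) := by
  obtain ⟨m', hm'B, hm'⟩ := hB.exists_join_of_le hL hx hy h.2.1 h.2.2.1
  have hle : m ≤ m' := h.2.2.2 m' hm'B (fun s => (hm' s).1 (by simp))
    (fun s => (hm' s).1 (by simp))
  have hge : m' t ≤ m t := (hm' t).2 (by
    rintro _ (rfl | rfl)
    exacts [h.2.1 t, h.2.2.1 t])
  exact (hle t).antisymm hge ▸ hm' t

/-- A base lies below every element of the subset whose component dominates its own. -/
theorem le_of_base_apply_le {L ι : Type*} [SemilatticeInf L] {B : Set (ι → L)}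
    (hB : WedgeVeeClosed B) {i : ι} {a : L} {e x : ι → L}
    (he : IsLeast {x : ι → L | x ∈ B ∧ x i = a} e) (hx : x ∈ B) (h : a ≤ x i) : e ≤ x :=
  (he.2 ⟨hB.1 _ he.1.1 _ hx, by simpa [he.1.2] using h⟩ : e ≤ e ⊓ x).trans inf_le_right

theorem isLUBwithin_projection {L ι : Type*} [Preorder L] {B : Set (ι → L)} {i : ι}
    {x y : L} {m : ι → L} (hm : m ∈ B) (h : IsLUB {x, y} (m i)) :
    IsLUBwithin {t : L | ∃ d ∈ B, d i = t} x y (m i) :=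
  ⟨⟨m, hm, rfl⟩, h.1 (by simp), h.1 (by simp), fun u _ hx hy => h.2 (by
    rintro _ (rfl | rfl) <;> assumption)⟩

/-- The projection of a collinear triple containing a ∨-irreducible base `p` to the
coordinate of that base is collinear. -/
theorem CollinearIn.projection {L ι : Type*} [SemilatticeInf L]
    (hL : ModularSemilattice L) {B : Set (ι → L)} (hB : WedgeVeeClosed B) {i : ι} {a : L}
    {p q r : ι → L} (hp : IsLeast {x : ι → L | x ∈ B ∧ x i = a} p) (hpi : JoinIrredIn B p)
    (hq : q ∈ B) (hr : r ∈ B) (h : CollinearIn B p q r) :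
    CollinearIn {t : L | ∃ d ∈ B, d i = t} a (q i) (r i) := by
  obtain ⟨hpq, hqr, hrp, m, mpq, mqr, mrp⟩ := h
  have lpq := mpq.isLUB_apply hL hB hp.1.1 hq i
  have lqr := mqr.isLUB_apply hL hB hq hr i
  have lrp := mrp.isLUB_apply hL hB hr hp.1.1 i
  have below {x : ι → L} (hx : x ∈ B) : a ≤ x i → p ≤ x := le_of_base_apply_le hB hp hx
  have hpa : p i = a := hp.1.2
  rw [hpa] at lpq lrp
  have ham : a ≤ m i := lpq.1 (by simp)
  have hqm : q i ≤ m i := lpq.1 (by simp)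
  have hrm : r i ≤ m i := lqr.1 (by simp)
  -- If `m i ≤ a`, then `p` would be the join of `p ⊓ q` and `p ⊓ r`.
  have not_le : ¬ m i ≤ a := by
    intro hma
    have hpqB := hB.1 _ hp.1.1 _ hq
    have hprB := hB.1 _ hp.1.1 _ hr
    obtain ⟨y, hyB, hy⟩ := hB.exists_join_of_le hL hpqB hprB
      (inf_le_left : p ⊓ q ≤ p) (inf_le_left : p ⊓ r ≤ p)
    have hqy : q i ≤ y i :=
      (le_inf (hpa ▸ hqm.trans hma) le_rfl : q i ≤ (p ⊓ q) i).trans ((hy i).1 (by simp))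
    have hry : r i ≤ y i :=
      (le_inf (hpa ▸ hrm.trans hma) le_rfl : r i ≤ (p ⊓ r) i).trans ((hy i).1 (by simp))
    have hmy : m i ≤ y i := lqr.2 (by rintro _ (rfl | rfl) <;> assumption)
    have hpy : p ≤ y := below hyB (ham.trans hmy)
    rcases hpi.2.2 _ _ hpqB hprB ⟨hp.1.1, inf_le_left, inf_le_left, fun u _ hu hu' =>
      hpy.trans fun t => (hy t).2 (by
        rintro _ (rfl | rfl)
        exacts [hu t, hu' t])⟩ with e | e
    · exact hpq.1 (inf_eq_left.1 e.symm)
    · exact hrp.2 (inf_eq_left.1 e.symm)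
  refine ⟨⟨fun h => hpq.1 (below hq h), fun h => not_le (lpq.2 ?_)⟩,
    ⟨fun h => hrp.2 (below hr (ham.trans (lqr.2 ?_))),
      fun h => hpq.1 (below hq (ham.trans (lqr.2 ?_)))⟩,
    ⟨fun h => not_le (lrp.2 ?_), fun h => hrp.2 (below hr h)⟩,
    m i, isLUBwithin_projection mpq.1 lpq, isLUBwithin_projection mqr.1 lqr,
    isLUBwithin_projection mrp.1 lrp⟩
  all_goals rintro _ (rfl | rfl) <;> first | exact h | exact le_rfl

/-- If the projection of `(p, q, r)` to the coordinate of the base `p` is collinear, then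
`p` lies below the join of `q` and `r`, but below neither `q` nor `r`. -/
theorem base_le_join_of_collinearIn_projection {L ι : Type*} [SemilatticeInf L]
    {B : Set (ι → L)} (hB : WedgeVeeClosed B) {i : ι} {a : L} {p q r m : ι → L}
    (hp : IsLeast {x : ι → L | x ∈ B ∧ x i = a} p) (hm : IsLUBwithin B q r m)
    (h : CollinearIn {t : L | ∃ d ∈ B, d i = t} a (q i) (r i)) :
    p ≤ m ∧ ¬ p ≤ q ∧ ¬ p ≤ r := by
  obtain ⟨haq, -, hra, l, laq, lqr, -⟩ := h
  refine ⟨le_of_base_apply_le hB hp hm.1 (laq.2.1.trans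
    (lqr.2.2.2 _ ⟨m, hm.1, rfl⟩ (hm.2.1 i) (hm.2.2.1 i))), fun h => haq.1 ?_, fun h => hra.2 ?_⟩
  exacts [hp.1.2 ▸ h i, hp.1.2 ▸ h i]

/-- Characterization of collinear triples of ∨-irreducible bases of `B` in terms of
collinearity of the relevant components in the projections `π_i(B)`, `π_j(B)`,
`π_k(B)`. -/
theorem stmt14 (L : Type*) [SemilatticeInf L] [Fintype L] (hL : ModularSemilattice L)
    (n : ℕ) (B : Set (Fin n → L)) (hB : WedgeVeeClosed B)
    (i j k : Fin n) (a b c : L) (ea eb ec : Fin n → L)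
    (hea : IsLeast {x : Fin n → L | x ∈ B ∧ x i = a} ea)
    (heb : IsLeast {x : Fin n → L | x ∈ B ∧ x j = b} eb)
    (hec : IsLeast {x : Fin n → L | x ∈ B ∧ x k = c} ec)
    (hia : JoinIrredIn B ea) (hib : JoinIrredIn B eb) (hic : JoinIrredIn B ec)
    (h1 : JoinExistsIn B ea eb) (h2 : JoinExistsIn B eb ec)
    (h3 : JoinExistsIn B ec ea) :
    CollinearIn B ea eb ec ↔
      (CollinearIn {t : L | ∃ d ∈ B, d i = t} a (eb i) (ec i) ∧
       CollinearIn {t : L | ∃ d ∈ B, d j = t} (ea j) b (ec j) ∧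
       CollinearIn {t : L | ∃ d ∈ B, d k = t} (ea k) (eb k) c) := by
  constructor
  · intro h
    exact ⟨h.projection hL hB hea hia heb.1.1 hec.1.1,
      (h.rotate.projection hL hB heb hib hec.1.1 hea.1.1).rotate.rotate,
      (h.rotate.rotate.projection hL hB hec hic hea.1.1 heb.1.1).rotate⟩
  · rintro ⟨ha, hb, hc⟩
    obtain ⟨m, hm⟩ := h1
    obtain ⟨m', hm'⟩ := h2
    obtain ⟨m'', hm''⟩ := h3
    obtain ⟨ham, hab, hac⟩ := base_le_join_of_collinearIn_projection hB hea hm' ha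
    obtain ⟨hbm, hbc, hba⟩ := base_le_join_of_collinearIn_projection hB heb hm'' hb.rotate
    obtain ⟨hcm, hca, hcb⟩ := base_le_join_of_collinearIn_projection hB hec hm hc.rotate.rotate
    refine ⟨⟨hab, hba⟩, ⟨hbc, hcb⟩, ⟨hca, hac⟩, m, hm, ⟨hm.1, hm.2.2.1, hcm, ?_⟩,
      ⟨hm.1, hcm, hm.2.1, ?_⟩⟩
    · exact fun u hu hbu hcu => hm.2.2.2 u hu (ham.trans (hm'.2.2.2 u hu hbu hcu)) hbu
    · exact fun u hu hcu hau => hm.2.2.2 u hu hau (hbm.trans (hm''.2.2.2 u hu hcu hau))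
end

section
/- Let E be a finite set, F ⊆ 2^E a ∩-closed family, and Σ an implicational base of F. Then for every pseudoclosed set P of F, Σ contains an implication A → B whose premise A satisfies A ⊆ P and c•(A) = P. -/
/-- The ∩-closed family determined by a collection `Sg` of implications. -/
def FSigma {E : Type*} (Sg : Set (Set E × Set E)) : Set (Set E) :=
  {X | ∀ p ∈ Sg, (p.2.Nonempty → p.1 ⊆ X → p.2 ⊆ X) ∧ (p.2 = ∅ → ¬ p.1 ⊆ X)}

/-- A family of subsets closed under binary intersection. -/
def InterClosed {E : Type*} (F : Set (Set E)) : Prop :=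
  ∀ X ∈ F, ∀ Y ∈ F, X ∩ Y ∈ F

/-- The closure `c(X)` exists, i.e. some member of `F` contains `X`. -/
def Closable {E : Type*} (F : Set (Set E)) (X : Set E) : Prop :=
  ∃ Y ∈ F, X ⊆ Y

/-- The closure `c(X)`: the intersection of all members of `F` containing `X`
(meaningful when `Closable F X`). -/
def closureOf {E : Type*} (F : Set (Set E)) (X : Set E) : Set E :=
  ⋂₀ {Y | Y ∈ F ∧ X ⊆ Y}

/-- `X` is quasiclosed with respect to the ∩-closed family `F`. -/
def Quasiclosed {E : Type*} (F : Set (Set E)) (X : Set E) : Prop :=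
  (Closable F X →
    ∀ Y, Y ⊆ X → Closable F Y → closureOf F Y ≠ closureOf F X → closureOf F Y ⊆ X) ∧
  (¬ Closable F X → ∀ Y, Y ⊆ X → Closable F Y → closureOf F Y ⊆ X)

/-- `X` is properly quasiclosed: quasiclosed but not closed. -/
def ProperlyQuasiclosed {E : Type*} (F : Set (Set E)) (X : Set E) : Prop :=
  Quasiclosed F X ∧ X ∉ F

/-- The images of `X` and `Y` under the closure operator are equivalent. -/
def EquivImage {E : Type*} (F : Set (Set E)) (X Y : Set E) : Prop :=
  (Closable F X ∧ Closable F Y ∧ closureOf F X = closureOf F Y) ∨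
  (¬ Closable F X ∧ ¬ Closable F Y)

/-- `X` is pseudoclosed: properly quasiclosed and minimal among the properly
quasiclosed sets whose image under the closure operator is equivalent to that of `X`. -/
def Pseudoclosed {E : Type*} (F : Set (Set E)) (X : Set E) : Prop :=
  ProperlyQuasiclosed F X ∧
  ∀ Q, ProperlyQuasiclosed F Q → EquivImage F Q X → Q ⊆ X → Q = X

/-- One step of forward chaining: `i_Σ(X) = X ∪ ⋃ {B : (A → B) ∈ Σ, A ⊆ X}`. -/
def iSig {E : Type*} (Sg : Set (Set E × Set E)) (X : Set E) : Set E :=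
  X ∪ ⋃ p ∈ {p | p ∈ Sg ∧ p.1 ⊆ X}, p.2

/-- `X` contains an inconsistent pair (a pair whose closure does not exist). -/
def HasIncPair {E : Type*} (F : Set (Set E)) (X : Set E) : Prop :=
  ∃ e1 ∈ X, ∃ e2 ∈ X, ¬ Closable F ({e1, e2} : Set E)

/-- The size `s(Σ) = ∑_{(A → B) ∈ Σ} (|A| + |B|)` of a collection of implications. -/
noncomputable def implSize {E : Type*} (Sg : Set (Set E × Set E)) : ℕ :=
  ∑ᶠ p ∈ Sg, (p.1.ncard + p.2.ncard)

lemma Closable.mono {E : Type*} {F : Set (Set E)} {X Y : Set E} (h : X ⊆ Y)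
    (hY : Closable F Y) : Closable F X :=
  let ⟨Z, hZ, hYZ⟩ := hY
  ⟨Z, hZ, h.trans hYZ⟩

lemma closureOf_mono {E : Type*} {F : Set (Set E)} {X Y : Set E} (h : X ⊆ Y) :
    closureOf F X ⊆ closureOf F Y :=
  Set.sInter_subset_sInter fun _ hZ => ⟨hZ.1, h.trans hZ.2⟩

lemma subset_closureOf {E : Type*} (F : Set (Set E)) (X : Set E) : X ⊆ closureOf F X :=
  Set.subset_sInter fun _ hZ => hZ.2

lemma closureOf_subset {E : Type*} {F : Set (Set E)} {X Y : Set E} (hY : Y ∈ F) (h : X ⊆ Y) :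
    closureOf F X ⊆ Y :=
  Set.sInter_subset_of_mem ⟨hY, h⟩

/-- An intersection of quasiclosed sets is quasiclosed. -/
lemma Quasiclosed.sInter {E : Type*} {F S : Set (Set E)} (hS : ∀ X ∈ S, Quasiclosed F X) :
    Quasiclosed F (⋂₀ S) := by
  constructor
  · intro _ Y hYS hY hne
    refine Set.subset_sInter fun X hX => ?_
    have hSX : ⋂₀ S ⊆ X := Set.sInter_subset_of_mem hX
    by_cases hXc : Closable F X
    · refine (hS X hX).1 hXc Y (hYS.trans hSX) hY fun heq => hne ?_
      exact (closureOf_mono hYS).antisymm ((closureOf_mono hSX).trans heq.ge)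
    · exact (hS X hX).2 hXc Y (hYS.trans hSX) hY
  · intro hSc Y hYS hY
    refine Set.subset_sInter fun X hX => ?_
    have hSX : ⋂₀ S ⊆ X := Set.sInter_subset_of_mem hX
    exact (hS X hX).2 (fun hXc => hSc (hXc.mono hSX)) Y (hYS.trans hSX) hY

/-- Equivalence of images passes to intermediate sets. -/
lemma EquivImage.of_subset_of_subset {E : Type*} {F : Set (Set E)} {A Q P : Set E}
    (h : EquivImage F A P) (hAQ : A ⊆ Q) (hQP : Q ⊆ P) : EquivImage F Q P := by
  rcases h with ⟨_, hP, heq⟩ | ⟨hA, hP⟩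
  · exact Or.inl ⟨hP.mono hQP, hP,
      (closureOf_mono hQP).antisymm (heq.ge.trans (closureOf_mono hAQ))⟩
  · exact Or.inr ⟨fun hQ => hA (hQ.mono hAQ), hP⟩

/-- A subset of a quasiclosed set `P` has an image equivalent to that of `P` unless its closure
exists and lies in `P`. -/
lemma Quasiclosed.equivImage {E : Type*} {F : Set (Set E)} {A P : Set E}
    (hP : Quasiclosed F P) (hAP : A ⊆ P) (h : Closable F A → ¬ closureOf F A ⊆ P) :
    EquivImage F A P := by
  by_cases hA : Closable F A
  · by_cases hPc : Closable F P
    · by_contra hne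
      exact h hA (hP.1 hPc A hAP hA fun heq => hne (Or.inl ⟨hA, hPc, heq⟩))
    · exact absurd (hP.2 hPc A hAP hA) (h hA)
  · exact Or.inr ⟨hA, fun hPc => hA (hPc.mono hAP)⟩

/-- A set outside `FSigma Sg` violates an implication of `Sg`; no subset of it that contains
the premise is in `FSigma Sg`, nor does it contain the closure of the premise. -/
lemma exists_violated_of_notMem_FSigma {E : Type*} {Sg : Set (Set E × Set E)} {P : Set E}
    (hP : P ∉ FSigma Sg) :
    ∃ p ∈ Sg, p.1 ⊆ P ∧ (∀ Q ∈ FSigma Sg, p.1 ⊆ Q → ¬ Q ⊆ P) ∧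
      (Closable (FSigma Sg) p.1 → ¬ closureOf (FSigma Sg) p.1 ⊆ P) := by
  simp only [FSigma, Set.mem_ofPred_eq, not_forall] at hP
  obtain ⟨p, hp, hviol⟩ := hP
  rcases p.2.eq_empty_or_nonempty with hB | hB
  · have hAP : p.1 ⊆ P := by simpa [hB] using hviol
    refine ⟨p, hp, hAP, fun Q hQ hAQ _ => (hQ p hp).2 hB hAQ, ?_⟩
    rintro ⟨Q, hQ, hAQ⟩
    exact absurd hAQ ((hQ p hp).2 hB)
  · have hAB : p.1 ⊆ P ∧ ¬ p.2 ⊆ P := by simpa [hB, hB.ne_empty] using hviol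
    refine ⟨p, hp, hAB.1, fun Q hQ hAQ hQP => hAB.2 (((hQ p hp).1 hB hAQ).trans hQP), ?_⟩
    exact fun _ hc => hAB.2
      ((Set.subset_sInter fun Q hQ => (hQ.1 p hp).1 hB hQ.2).trans hc)

/-- Every implicational base of a ∩-closed family contains, for each pseudoclosed set
`P`, an implication whose premise `A` satisfies `A ⊆ P` and `c•(A) = P`. -/
theorem stmt15 (E : Type*) [Fintype E] (F : Set (Set E)) (Sg : Set (Set E × Set E))
    (hF : InterClosed F) (hbase : FSigma Sg = F)
    (P : Set E) (hP : Pseudoclosed F P) :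
    ∃ p ∈ Sg, p.1 ⊆ P ∧ closureOf {X : Set E | Quasiclosed F X} p.1 = P := by
  subst hbase
  obtain ⟨⟨hPq, hPF⟩, hmin⟩ := hP
  obtain ⟨p, hp, hAP, hsub, hcl⟩ := exists_violated_of_notMem_FSigma hPF
  have hAQ := subset_closureOf {X : Set E | Quasiclosed (FSigma Sg) X} p.1
  have hQP : closureOf {X : Set E | Quasiclosed (FSigma Sg) X} p.1 ⊆ P := closureOf_subset hPq hAP
  exact ⟨p, hp, hAP, hmin _
    ⟨Quasiclosed.sInter fun _ hX => hX.1, fun hQF => hsub _ hQF hAQ hQP⟩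
    ((hPq.equivImage hAP hcl).of_subset_of_subset hAQ hQP) hQP⟩
end
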